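/- Let p be a prime with p ≡ 3 (mod 4) and 2^{p−1} ≡ 1 (mod p^2), let q1 be a prime factor of p − 2 such that q1^{p−1} ≢ 1 (mod p^2), and let n be an odd composite number. Then p splits in the imaginary quadratic field K = ℚ(√(q1^2 − p^n)), and for any prime ideal ℘ of the ring of integers of K lying over p, the order of the ideal class of ℘ in the ideal class group of K is exactly n. -/

import Mathlib

/-!
Write `ω² = q² - pⁿ` and `α = q + ω`. Then `(p) = 𝔭𝔮` with `𝔭 = (p, q + ω)`, `𝔮 = (p, q - ω)`, and
`𝔭ⁿ = (α)`. If the class of `𝔭` had order a proper divisor of `n`, then `α = ±β ^ l` with `l`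
prime, `n = lt` and `t ≥ 3` odd. Here `β = a + √(-D)` with `a² + D = pᵗ`, and comparing real parts
gives `a ∣ q`. The case `a = ±1` contradicts `q ^ (p - 1) ≢ 1 (mod p²)`. In the case `a = ±q` the
Wieferich condition forces `l > 2p²`. At a prime over `p` where `β` is a unit, the integer
`c = β ^ l + β̄ ^ l = ±2q` is then congruent to `β ^ l` modulo `p ^ (tl)`: the numbers `β` and `c`
are multiplicatively dependent to a `p`-adic precision that their small archimedean sizes do not
allow, as one sees by comparing both sizes of an interpolation determinant (the method of Laurent
for linear forms in two logarithms).
-/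

/-! ### Interpolation determinants -/

theorem prod_pow_div_factorial_le {K : ℕ} {x y : ℝ} (hx : 0 ≤ x) (h : 8 * x ≤ K * y) :
    ∏ k ∈ Finset.range K, x ^ k / k.factorial ≤ y ^ (∑ k ∈ Finset.range K, k) := by
  have hexp : Real.exp 2 ≤ 8 := by
    rw [show (2 : ℝ) = 1 + 1 by norm_num, Real.exp_add]
    nlinarith [Real.exp_one_lt_d9, Real.exp_pos 1]
  have hK : ∏ k ∈ Finset.range K, (K : ℝ) ^ k / k.factorial ≤ 8 ^ (∑ k ∈ Finset.range K, k) := by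
    rcases K with _ | m
    · simp
    calc ∏ k ∈ Finset.range (m + 1), ((m + 1 : ℕ) : ℝ) ^ k / k.factorial
      _ ≤ ∏ _k ∈ Finset.range m, Real.exp (m + 1 : ℕ) := by
        rw [Finset.prod_range_succ', pow_zero, Nat.factorial_zero, Nat.cast_one, div_one, mul_one]
        exact Finset.prod_le_prod (fun _ _ => by positivity) fun k _ =>
          Real.pow_div_factorial_le_exp _ (Nat.cast_nonneg _) _
      _ = Real.exp 2 ^ (∑ k ∈ Finset.range (m + 1), k) := by
        have hsum : 2 * ∑ k ∈ Finset.range (m + 1), k = m * (m + 1) := by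
          rw [mul_comm, Finset.sum_range_id_mul_two, Nat.add_sub_cancel, mul_comm]
        rw [Finset.prod_const, Finset.card_range, ← Real.exp_nat_mul, ← Real.exp_nat_mul,
          ← Nat.cast_mul, mul_comm _ (2 : ℝ), ← hsum]
        push_cast
        rfl
      _ ≤ 8 ^ (∑ k ∈ Finset.range (m + 1), k) := by gcongr
  rcases K.eq_zero_or_pos with rfl | hpos
  · simp
  have hKpos : (0 : ℝ) < K := by exact_mod_cast hpos
  have hy : 0 ≤ y := by
    by_contra! hy
    nlinarith
  calc ∏ k ∈ Finset.range K, x ^ k / k.factorial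
    _ ≤ ∏ k ∈ Finset.range K, (y / 8) ^ k * ((K : ℝ) ^ k / k.factorial) := by
      refine Finset.prod_le_prod (fun _ _ => by positivity) fun k _ => ?_
      rw [← mul_div_assoc, ← mul_pow]
      gcongr
      linarith
    _ ≤ (y / 8) ^ (∑ k ∈ Finset.range K, k) * 8 ^ (∑ k ∈ Finset.range K, k) := by
      rw [Finset.prod_mul_distrib, Finset.prod_pow_eq_pow_sum]
      gcongr
    _ = y ^ (∑ k ∈ Finset.range K, k) := by rw [← mul_pow, div_mul_cancel₀ _ (by norm_num)]

theorem sum_range_card_le_sum (T : Finset ℕ) : ∑ i ∈ Finset.range T.card, i ≤ ∑ i ∈ T, i := by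
  induction T using Finset.induction_on_max with
  | empty => simp
  | insert a s ha ih =>
    have hcard : s.card ≤ a := by
      simpa using Finset.card_le_card fun x hx => Finset.mem_range.2 (ha x hx)
    have has : a ∉ s := fun h => lt_irrefl _ (ha a h)
    rw [Finset.card_insert_of_notMem has, Finset.sum_range_succ, Finset.sum_insert has]
    omega

theorem sum_range_card_le_sum_of_injOn {ι : Type*} [Fintype ι] {w : ι → ℕ}
    (hw : Set.InjOn w {i | w i < Fintype.card ι}) :
    ∑ i ∈ Finset.range (Fintype.card ι), i ≤ ∑ i, w i := by
  classical
  set N := Fintype.card ι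
  set T := Finset.univ.filter fun i => w i < N with hTdef
  set T' := Finset.univ.filter fun i => ¬ w i < N
  have hcard : T.card + T'.card = N := Finset.card_filter_add_card_filter_not _
  have hsmall : ∑ i ∈ Finset.range T.card, i ≤ ∑ i ∈ T, w i := by
    have hinj : Set.InjOn w T := by simpa [hTdef] using hw
    simpa [Finset.card_image_of_injOn hinj, Finset.sum_image hinj] using
      sum_range_card_le_sum (T.image w)
  have hlarge : T'.card * N ≤ ∑ i ∈ T', w i :=
    Finset.card_nsmul_le_sum _ _ _ fun i hi => not_lt.1 (Finset.mem_filter.1 hi).2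
  calc ∑ i ∈ Finset.range N, i
    _ = ∑ i ∈ Finset.range T.card, i + ∑ i ∈ Finset.range T'.card, (T.card + i) := by
      rw [← Finset.sum_range_add, hcard]
    _ ≤ ∑ i ∈ T, w i + T'.card * N := by
      refine Nat.add_le_add hsmall ?_
      simpa using Finset.sum_le_card_nsmul (Finset.range T'.card) (T.card + ·) N fun i hi => by
        have := Finset.mem_range.1 hi
        omega
    _ ≤ ∑ i ∈ T, w i + ∑ i ∈ T', w i := by gcongr
    _ = ∑ i, w i := Finset.sum_filter_add_sum_filter_not _ _ _

section Determinant

variable {R ι : Type*} [CommRing R] [Fintype ι] [DecidableEq ι]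

-- Expanding by multilinearity in the rows, a choice of summands contributes `0` unless these are
-- pairwise distinct, and pairwise distinct summands carry a large total weight.
theorem pow_sum_range_dvd_det {κ : Type*} [Fintype κ] (π : R) {w : κ → ℕ}
    (hw : Set.InjOn w {o | w o < Fintype.card ι}) (A : Matrix ι κ R) (B : Matrix κ ι R) :
    π ^ (∑ i ∈ Finset.range (Fintype.card ι), i) ∣
      (A * Matrix.of fun o ν => π ^ w o * B o ν).det := by
  classical
  have hdet : (A * Matrix.of fun o ν => π ^ w o * B o ν).det =
      ∑ φ : ι → κ, (∏ i, A i (φ i) * π ^ w (φ i)) * (B.submatrix φ id).det := by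
    have hrow : (A * Matrix.of fun o ν => π ^ w o * B o ν) =
        fun i => ∑ o, (A i o * π ^ w o) • B o := by
      ext i ν
      simp [Matrix.mul_apply, Finset.sum_apply, mul_assoc]
    rw [hrow]
    refine ((Matrix.detRowAlternating (n := ι) (R := R)).toMultilinearMap.map_sum _).trans ?_
    exact Finset.sum_congr rfl fun φ _ =>
      Matrix.det_mul_column (fun i => A i (φ i) * π ^ w (φ i)) (B.submatrix φ id)
  rw [hdet]
  refine Finset.dvd_sum fun φ _ => ?_
  by_cases hφ : Function.Injective φ
  · have hle := sum_range_card_le_sum_of_injOn (w := w ∘ φ) fun i hi j hj h => hφ (hw hi hj h)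
    rw [Finset.prod_mul_distrib, Finset.prod_pow_eq_pow_sum]
    exact ((pow_dvd_pow π hle).mul_left _).mul_right _
  · obtain ⟨i, j, hij, hne⟩ := Function.not_injective_iff.1 hφ
    rw [Matrix.det_zero_of_row_eq hne (by ext ν; simp [hij]), mul_zero]
    exact dvd_zero _

theorem choose_mul_one_add_mul_pow_eq_sum (π h : R) (k : ℕ) {z Z : ℕ} (hz : z < Z) :
    π ^ k * z.choose k * (1 + π * h) ^ z = ∑ j ∈ Finset.range Z,
      (1 + π * h) ^ k * j.choose k * h ^ (j - k) * (π ^ j * z.choose j) := by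
  rw [← Finset.sum_subset (Finset.range_mono hz) fun j _ hj => by
    simp [Nat.choose_eq_zero_of_lt (show z < j by simpa using hj)]]
  rcases lt_or_ge z k with hzk | hkz
  · rw [Nat.choose_eq_zero_of_lt hzk, Finset.sum_eq_zero]
    · simp
    · intro j hj
      have hjk : j < k := (Finset.mem_range_succ_iff.1 hj).trans_lt hzk
      simp [Nat.choose_eq_zero_of_lt hjk]
  obtain ⟨d, rfl⟩ := Nat.exists_eq_add_of_le hkz
  rw [Nat.succ_eq_add_one, add_assoc, Finset.sum_range_add, Finset.sum_eq_zero fun j hj => by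
    simp [Nat.choose_eq_zero_of_lt (Finset.mem_range.1 hj)], zero_add, pow_add,
    add_comm (1 : R), add_pow (π * h) 1 d, Finset.mul_sum, Finset.mul_sum]
  refine Finset.sum_congr rfl fun i _ => ?_
  have hchoose : ((k + d).choose (k + i) : R) * (k + i).choose k =
      (k + d).choose k * d.choose i := by
    have := Nat.choose_mul (n := k + d) (Nat.le_add_right k i)
    simp only [Nat.add_sub_cancel_left] at this
    exact_mod_cast congrArg (Nat.cast (R := R)) this
  simp only [Nat.add_sub_cancel_left, one_pow, mul_one, mul_pow, pow_add]
  linear_combination (-(π ^ k * π ^ i * h ^ i * (π * h + 1) ^ k)) * hchoose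

theorem pow_sum_range_dvd_pow_mul_det_choose (π : R) {E : ℕ} (hE : Fintype.card ι ≤ E)
    (k z : ι → ℕ) (h : ι → R) (Y : Matrix ι ι R)
    (hY : ∀ i ν, π ^ E ∣ Y i ν - (1 + π * h i) ^ z ν) :
    π ^ (∑ i ∈ Finset.range (Fintype.card ι), i) ∣
      π ^ (∑ i, k i) * (Matrix.of fun i ν => ((z ν).choose (k i) : R) * Y i ν).det := by
  choose d hd using hY
  obtain ⟨Z, hZ⟩ : ∃ Z, ∀ ν, z ν < Z :=
    ⟨_, fun ν => Nat.lt_succ_of_le (Finset.le_sup (f := z) (Finset.mem_univ ν))⟩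
  let w : Fin Z ⊕ ι → ℕ := Sum.elim (fun j => j) fun _ => E
  let A : Matrix ι (Fin Z ⊕ ι) R := Matrix.of fun i => Sum.elim
    (fun j => (1 + π * h i) ^ k i * (j : ℕ).choose (k i) * h i ^ (j - k i : ℕ))
    fun i' => if i = i' then 1 else 0
  let B : Matrix (Fin Z ⊕ ι) ι R := Matrix.of <| Sum.elim (fun j ν => ((z ν).choose j : R))
    fun i ν => π ^ k i * (z ν).choose (k i) * d i ν
  have hw : Set.InjOn w {o | w o < Fintype.card ι} := by
    rintro (j | i) hj (j' | i') hj' hjj' <;> simp only [w, Set.mem_ofPred_eq, Sum.elim_inl,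
      Sum.elim_inr, Fin.val_inj] at hj hj' hjj' <;> first | rw [hjj'] | omega
  have hM : (Matrix.of fun i ν => π ^ k i * (((z ν).choose (k i) : R) * Y i ν)) =
      A * Matrix.of fun o ν => π ^ w o * B o ν := by
    ext i ν
    have hexp := choose_mul_one_add_mul_pow_eq_sum π (h i) (k i) (hZ ν)
    rw [Finset.sum_range] at hexp
    simp only [Matrix.mul_apply, Matrix.of_apply, Fintype.sum_sum_type,
      A, B, w, Sum.elim_inl, Sum.elim_inr, ite_mul, one_mul, zero_mul, Finset.sum_ite_eq,
      Finset.mem_univ, if_true]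
    rw [← hexp]
    linear_combination π ^ k i * (z ν).choose (k i) * hd i ν
  rw [← Finset.prod_pow_eq_pow_sum Finset.univ, ← Matrix.det_mul_column]
  simp only [Matrix.of_apply]
  rw [hM]
  exact pow_sum_range_dvd_det π hw A B

theorem norm_det_le_factorial_mul_prod {M : Matrix ι ι ℂ} {b : ι → ℝ} (h : ∀ i j, ‖M i j‖ ≤ b i) :
    ‖M.det‖ ≤ (Fintype.card ι).factorial * ∏ i, b i := by
  rw [← Matrix.det_transpose, Matrix.det_apply]
  calc ‖∑ σ : Equiv.Perm ι, Equiv.Perm.sign σ • ∏ i, M.transpose (σ i) i‖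
    _ ≤ ∑ σ : Equiv.Perm ι, ‖Equiv.Perm.sign σ • ∏ i, M.transpose (σ i) i‖ := norm_sum_le _ _
    _ ≤ ∑ _σ : Equiv.Perm ι, ∏ i, b i := by
      refine Finset.sum_le_sum fun σ _ => ?_
      rw [Units.smul_def, zsmul_eq_mul, norm_mul, norm_prod, Complex.norm_intCast,
        ← Int.cast_abs, Int.abs_eq_natAbs, Int.units_natAbs, Nat.cast_one, Int.cast_one, one_mul]
      exact Finset.prod_le_prod (fun _ _ => norm_nonneg _) fun i _ => h i _
    _ = (Fintype.card ι).factorial * ∏ i, b i := by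
      rw [Finset.sum_const, Finset.card_univ, Fintype.card_perm, nsmul_eq_mul]

end Determinant

section ZeroEstimate

open Polynomial

variable {R ι : Type*} [CommRing R]

theorem coeff_prod_sum_of_natDegree_le (s : Finset ι) (f : ι → R[X]) (n : ι → ℕ)
    (h : ∀ i ∈ s, (f i).natDegree ≤ n i) :
    (∏ i ∈ s, f i).coeff (∑ i ∈ s, n i) = ∏ i ∈ s, (f i).coeff (n i) := by
  classical
  induction s using Finset.induction_on with
  | empty => simp
  | insert a s ha ih =>
    have hs : ∀ i ∈ s, (f i).natDegree ≤ n i := fun i hi => h i (Finset.mem_insert_of_mem hi)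
    rw [Finset.prod_insert ha, Finset.sum_insert ha, Finset.prod_insert ha, ← ih hs]
    exact coeff_mul_add_eq_of_natDegree_le (h a (Finset.mem_insert_self _ _))
      ((natDegree_prod_le _ _).trans (Finset.sum_le_sum hs))

theorem coeff_det_sum_of_natDegree_le [Fintype ι] [DecidableEq ι] {Q : Matrix ι ι R[X]}
    {n : ι → ℕ} (h : ∀ i l, (Q i l).natDegree ≤ n l) :
    Q.det.coeff (∑ l, n l) = (Matrix.of fun i l => (Q i l).coeff (n l)).det := by
  rw [Matrix.det_apply, Matrix.det_apply, finsetSum_coeff]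
  refine Finset.sum_congr rfl fun σ _ => ?_
  rw [coeff_smul, coeff_prod_sum_of_natDegree_le _ _ _ fun i _ => h _ _]
  simp only [Matrix.of_apply]

theorem natDegree_det_le_sum [Fintype ι] [DecidableEq ι] {Q : Matrix ι ι R[X]} {n : ι → ℕ}
    (h : ∀ i l, (Q i l).natDegree ≤ n l) : Q.det.natDegree ≤ ∑ l, n l := by
  rw [Matrix.det_apply]
  refine natDegree_sum_le_of_forall_le _ _ fun σ _ => ?_
  exact (natDegree_smul_le _ _).trans
    ((natDegree_prod_le _ _).trans (Finset.sum_le_sum fun i _ => h _ _))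

variable {F : Type*} [Field F] {m : ℕ} {P : Fin m → F[X]} {w : Fin m → F}

/-- The matrix with rows `(P l (X + r) * w l ^ r)_l`, for `r < m`: it expresses the values of the
exponential polynomial `∑ l, P l (x) * w l ^ x * c l` at the points `x, x + 1, …, x + m - 1`
linearly in the coefficients `c l * w l ^ x`. -/
noncomputable def shiftMatrix (P : Fin m → F[X]) (w : Fin m → F) : Matrix (Fin m) (Fin m) F[X] :=
  Matrix.of fun r l => taylor (r : F) (P l) * C (w l ^ (r : ℕ))

theorem natDegree_shiftMatrix_le (r l : Fin m) :
    (shiftMatrix P w r l).natDegree ≤ (P l).natDegree :=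
  (natDegree_mul_C_le _ _).trans (natDegree_taylor _ _).le

theorem det_shiftMatrix_ne_zero (hP : ∀ l, P l ≠ 0) (hw : Function.Injective w) :
    (shiftMatrix P w).det ≠ 0 := by
  have hlead : (Matrix.of fun r l => (shiftMatrix P w r l).coeff (P l).natDegree) =
      Matrix.of fun r l => (P l).leadingCoeff * (Matrix.vandermonde w).transpose r l := by
    ext r l
    simp only [shiftMatrix, Matrix.of_apply, coeff_mul_C, coeff_taylor_natDegree,
      Matrix.transpose_apply, Matrix.vandermonde_apply]
  intro h0
  have hcoeff := coeff_det_sum_of_natDegree_le (natDegree_shiftMatrix_le (P := P) (w := w))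
  rw [h0, coeff_zero, hlead, Matrix.det_mul_row, Matrix.det_transpose] at hcoeff
  refine mul_ne_zero (Finset.prod_ne_zero_iff.2 fun l _ => leadingCoeff_ne_zero.2 (hP l)) ?_
    hcoeff.symm
  exact Matrix.det_vandermonde_ne_zero_iff.2 hw

theorem card_le_sum_natDegree_of_shift_zeros (hP : ∀ l, P l ≠ 0) (hw : Function.Injective w)
    (T : Finset F)
    (hT : ∀ x ∈ T, ∃ c : Fin m → F, c ≠ 0 ∧
      ∀ r : Fin m, ∑ l, (P l).eval (x + (r : ℕ)) * w l ^ (r : ℕ) * c l = 0) :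
    T.card ≤ ∑ l, (P l).natDegree := by
  by_contra! hlt
  refine det_shiftMatrix_ne_zero hP hw (eq_zero_of_natDegree_lt_card_of_eval_eq_zero' _ T ?_
    ((natDegree_det_le_sum natDegree_shiftMatrix_le).trans_lt hlt))
  intro x hx
  obtain ⟨c, hc0, hc⟩ := hT x hx
  rw [← coe_evalRingHom, RingHom.map_det, ← Matrix.exists_mulVec_eq_zero_iff]
  refine ⟨c, hc0, funext fun r => ?_⟩
  simpa [Matrix.mulVec, dotProduct, shiftMatrix, taylor_eval] using hc r

theorem eq_zero_of_shift_zeros {α : Type*} {L d : ℕ} {P : Fin L → F[X]}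
    (hd : ∀ l, (P l).natDegree ≤ d) {w : F} (hw : Function.Injective fun l : ℕ => w ^ l)
    {T : Finset α} {x y : α → F} (hx : Set.InjOn x T) (hy : ∀ τ ∈ T, y τ ≠ 0)
    (hcard : L * d < T.card)
    (h : ∀ τ ∈ T, ∀ r < L, ∑ l, (P l).eval (x τ + r) * (w ^ r * y τ) ^ (l : ℕ) = 0) : P = 0 := by
  classical
  by_contra hP
  let ι := {l : Fin L // P l ≠ 0}
  let e : Fin (Fintype.card ι) ≃ ι := (Fintype.equivFin ι).symm
  obtain ⟨l₀, hl₀⟩ : ∃ l, P l ≠ 0 := Function.ne_iff.1 hP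
  have hιL : Fintype.card ι ≤ L := (Fintype.card_subtype_le _).trans_eq (Fintype.card_fin L)
  have hinj : Function.Injective fun i => w ^ ((e i : Fin L) : ℕ) := fun i j hij =>
    e.injective (Subtype.ext (Fin.ext (hw hij)))
  refine (card_le_sum_natDegree_of_shift_zeros (P := fun i => P (e i)) (fun i => (e i).2) hinj
    (T.image x) ?_).not_gt ?_
  · simp only [Finset.forall_mem_image]
    intro τ hτ
    refine ⟨fun i => y τ ^ ((e i : Fin L) : ℕ), fun h0 => ?_, fun r => ?_⟩
    · have h1 := congrFun h0 (e.symm ⟨l₀, hl₀⟩)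
      exact pow_ne_zero _ (hy τ hτ) h1
    rw [← h τ hτ r (r.2.trans_le hιL), e.sum_comp fun l : ι =>
      (P l).eval (x τ + r) * (w ^ (l : ℕ)) ^ (r : ℕ) * y τ ^ (l : ℕ)]
    rw [← Finset.sum_filter_of_ne (p := fun l => P l ≠ 0) fun l _ hl h0 => hl (by simp [h0]),
      Finset.sum_subtype (p := fun l => P l ≠ 0) _ (by simp)]
    refine Finset.sum_congr rfl fun l _ => ?_
    rw [mul_pow, pow_right_comm, mul_assoc]
  · rw [Finset.card_image_of_injOn hx]
    refine (Finset.sum_le_card_nsmul _ _ d fun i _ => hd _).trans_lt ?_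
    rw [Finset.card_univ, Fintype.card_fin, smul_eq_mul]
    exact (Nat.mul_le_mul_right d hιL).trans_lt hcard

variable {K : ℕ}

/-- The polynomial `∑ k, u k * (X choose k)`. -/
noncomputable def binomialPolynomial (u : Fin K → F) : F[X] :=
  ∑ k, (u k / (k : ℕ).factorial) • descPochhammer F k

theorem natDegree_binomialPolynomial_le (u : Fin K → F) :
    (binomialPolynomial u).natDegree ≤ K - 1 := by
  refine natDegree_sum_le_of_forall_le _ _ fun k _ => (natDegree_smul_le _ _).trans ?_
  rw [descPochhammer_natDegree]
  omega

variable [CharZero F]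

theorem eval_natCast_binomialPolynomial (u : Fin K → F) (n : ℕ) :
    (binomialPolynomial u).eval (n : F) = ∑ k, u k * n.choose k := by
  rw [binomialPolynomial, eval_finsetSum]
  refine Finset.sum_congr rfl fun k _ => ?_
  have hk : ((k : ℕ).factorial : F) ≠ 0 := by exact_mod_cast Nat.factorial_ne_zero _
  rw [eval_smul, descPochhammer_eval_eq_descFactorial, Nat.descFactorial_eq_factorial_mul_choose,
    smul_eq_mul, Nat.cast_mul]
  field_simp

theorem binomialPolynomial_eq_zero_iff {u : Fin K → F} : binomialPolynomial u = 0 ↔ u = 0 := by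
  refine ⟨fun h => ?_, fun h => by simp [binomialPolynomial, h]⟩
  let S : Sequence F := ⟨descPochhammer F, fun k => by
    rw [degree_eq_natDegree (monic_descPochhammer F k).ne_zero, descPochhammer_natDegree]⟩
  have hli := S.linearIndependent.comp (Fin.val : Fin K → ℕ) Fin.val_injective
  ext k
  simpa [Nat.factorial_ne_zero] using Fintype.linearIndependent_iff.1 hli _ h k

end ZeroEstimate

theorem exists_det_submatrix_ne_zero {F ι α : Type*} [Field F] [Fintype ι] [DecidableEq ι]
    [Finite α] {M : Matrix ι α F} (hM : LinearIndependent F M.row) :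
    ∃ f : ι → α, (M.submatrix id f).det ≠ 0 := by
  have := Fintype.ofFinite α
  obtain ⟨κ, a, -, hspan, hli⟩ := exists_linearIndependent' F M.col
  have htop : Submodule.span F (Set.range M.col) = ⊤ := by
    refine Submodule.eq_top_of_finrank_eq ?_
    rw [← Matrix.rank_eq_finrank_span_cols, hM.rank_matrix, Module.finrank_fintype_fun_eq_card]
  let e : ι ≃ κ := (Pi.basisFun F ι).indexEquiv (Module.Basis.mk hli (hspan.trans htop).ge)
  refine ⟨a ∘ e, ?_⟩
  rw [← isUnit_iff_ne_zero, ← Matrix.isUnit_iff_isUnit_det,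
    ← Matrix.linearIndependent_cols_iff_isUnit]
  exact hli.comp e e.injective

section Interpolation

variable {K L : ℕ} {R α : Type*} [CommRing R]

/-- The interpolation matrix in the sense of Laurent: its rows are the monomials
`(z choose k) * Y ^ l` with `k < K` and `l < L`, its columns are the points `(z ν, Y ν)`. -/
def interpMatrix (K L : ℕ) (z : α → ℕ) (Y : α → R) : Matrix (Fin K × Fin L) α R :=
  Matrix.of fun i ν => (z ν).choose i.1 * Y ν ^ (i.2 : ℕ)

theorem map_det_interpMatrix {S : Type*} [CommRing S] (φ : R →+* S)
    (z : Fin K × Fin L → ℕ) (Y : Fin K × Fin L → R) :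
    φ (interpMatrix K L z Y).det = (interpMatrix K L z (φ ∘ Y)).det := by
  rw [RingHom.map_det]
  congr 1
  ext i ν
  simp [interpMatrix]

theorem pow_sum_range_dvd_pow_mul_det_interpMatrix (π h : R) {E : ℕ} (hE : K * L ≤ E)
    (z : Fin K × Fin L → ℕ) {Y : Fin K × Fin L → R}
    (hY : ∀ ν, π ^ E ∣ Y ν - (1 + π * h) ^ z ν) :
    π ^ (∑ i ∈ Finset.range (K * L), i) ∣
      π ^ (L * ∑ k ∈ Finset.range K, k) * (interpMatrix K L z Y).det := by
  have hpow : ∀ l : Fin L, ∃ g, (1 + π * h) ^ (l : ℕ) = 1 + π * g := fun l => by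
    obtain ⟨g, hg⟩ : π ∣ (1 + π * h) ^ (l : ℕ) - 1 := by
      simpa using (dvd_mul_right π h).trans (by
        simpa using sub_dvd_pow_sub_pow (1 + π * h) 1 (l : ℕ))
    exact ⟨g, by rw [← hg]; ring⟩
  choose g hg using hpow
  have hsum : ∑ i : Fin K × Fin L, (i.1 : ℕ) = L * ∑ k ∈ Finset.range K, k := by
    rw [Fintype.sum_prod_type, Finset.mul_sum, Finset.sum_range]
    simp
  have hcard : Fintype.card (Fin K × Fin L) = K * L := by simp
  rw [← hsum, ← hcard]
  refine pow_sum_range_dvd_pow_mul_det_choose π (hcard.trans_le hE) _ z (fun i => g i.2)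
    (Matrix.of fun i ν => Y ν ^ (i.2 : ℕ)) fun i ν => ?_
  rw [Matrix.of_apply, ← hg, pow_right_comm]
  exact (hY ν).trans (sub_dvd_pow_sub_pow _ _ _)

theorem norm_det_interpMatrix_le {Z y G : ℝ} (hZ0 : 0 ≤ Z) (hZ : 8 * Z ≤ K * y)
    (hG : 0 ≤ G) {z : Fin K × Fin L → ℕ} {Y : Fin K × Fin L → ℂ} (hz : ∀ ν, z ν ≤ Z)
    (hY : ∀ ν, ‖Y ν‖ ≤ G) :
    ‖(interpMatrix K L z Y).det‖ ≤ (K * L).factorial *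
      ((y ^ (∑ k ∈ Finset.range K, k)) ^ L * (G ^ (∑ l ∈ Finset.range L, l)) ^ K) := by
  have hentry : ∀ i ν, ‖interpMatrix K L z Y i ν‖ ≤
      Z ^ (i.1 : ℕ) / (i.1 : ℕ).factorial * G ^ (i.2 : ℕ) := by
    intro i ν
    rw [interpMatrix, Matrix.of_apply, norm_mul, norm_pow, Complex.norm_natCast]
    gcongr
    · refine (Nat.choose_le_pow_div _ _).trans ?_
      gcongr
      exact hz ν
    · exact hY ν
  refine (norm_det_le_factorial_mul_prod hentry).trans ?_
  rw [Fintype.card_prod, Fintype.card_fin, Fintype.card_fin, Finset.prod_mul_distrib,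
    Fintype.prod_prod_type, Fintype.prod_prod_type_right]
  simp only [Finset.prod_const, Finset.card_univ, Fintype.card_fin]
  rw [Finset.prod_pow, Finset.prod_pow,
    Fin.prod_univ_eq_prod_range (fun k : ℕ => Z ^ k / k.factorial),
    Fin.prod_univ_eq_prod_range (fun l : ℕ => G ^ l), Finset.prod_pow_eq_pow_sum _ _ G]
  gcongr
  exact prod_pow_div_factorial_le hZ0 hZ

theorem linearIndependent_row_interpMatrix {F σ : Type*} [Field F] [CharZero F] [Fintype σ]
    {z : σ → ℕ} (hz : Function.Injective z) {y : σ → F} (hy : ∀ τ, y τ ≠ 0) {w : F}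
    (hw : Function.Injective fun l : ℕ => w ^ l) (hcard : L * (K - 1) < Fintype.card σ) :
    LinearIndependent F (interpMatrix K L (fun ν : σ × Fin L => z ν.1 + ν.2)
      (fun ν => w ^ (ν.2 : ℕ) * y ν.1)).row := by
  rw [Fintype.linearIndependent_iff]
  intro u hu
  have hP : (fun l : Fin L => binomialPolynomial fun k : Fin K => u (k, l)) = 0 := by
    refine eq_zero_of_shift_zeros (fun l => natDegree_binomialPolynomial_le _) hw
      (T := Finset.univ) (x := fun τ => (z τ : F)) (Nat.cast_injective.comp hz).injOn
      (fun τ _ => hy τ) hcard fun τ _ r hr => ?_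
    have h0 := congrFun hu (τ, ⟨r, hr⟩)
    rw [Finset.sum_apply, Fintype.sum_prod_type_right] at h0
    rw [← Pi.zero_apply (M := fun _ => F) (τ, (⟨r, hr⟩ : Fin L)), ← h0]
    refine Finset.sum_congr rfl fun l _ => ?_
    rw [← Nat.cast_add, eval_natCast_binomialPolynomial, Finset.sum_mul]
    exact Finset.sum_congr rfl fun k _ => mul_assoc _ _ _
  exact fun i => congrFun (binomialPolynomial_eq_zero_iff.1 (congrFun hP i.2)) i.1

theorem exists_mul_eq_add_mul {m : ℕ} (hm : 0 < m) (l s : ℕ) :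
    ∃ z a : ℕ, a < m ∧ m * z = a + l * s := by
  refine ⟨(m - 1 + l * s) / m, m - 1 - (m - 1 + l * s) % m, by omega, ?_⟩
  have hdiv := Nat.div_add_mod (m - 1 + l * s) m
  have hmod := Nat.mod_lt (m - 1 + l * s) hm
  omega

theorem injective_add_of_mul_eq_add_mul {m l ρ S : ℕ} (hρ : m * ρ ≤ l) {z a : ℕ → ℕ}
    (ha : ∀ s, a s < m) (hz : ∀ s, m * z s = a s + l * s) :
    Function.Injective fun τ : Fin ρ × Fin S => z τ.2 + τ.1 := by
  have hdiv : ∀ τ : Fin ρ × Fin S, m * (z τ.2 + τ.1) / l = τ.2 := by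
    intro τ
    have hlt : a τ.2 + m * τ.1 < l := by
      have := Nat.mul_le_mul_left m τ.1.2
      have := ha τ.2
      rw [Nat.succ_eq_add_one, mul_add] at *
      omega
    rw [mul_add, hz, add_right_comm, Nat.add_mul_div_left _ _ (by omega), Nat.div_eq_of_lt hlt,
      zero_add]
  rintro ⟨r, s⟩ ⟨r', s'⟩ h
  have hs : s = s' := Fin.ext (by
    rw [← hdiv (r, s), ← hdiv (r', s')]
    exact congrArg (fun x => m * x / l) h)
  subst hs
  exact Prod.ext (Fin.ext (Nat.add_left_cancel h)) rfl

theorem exists_det_interpMatrix_ne_zero {F : Type*} [Field F] [CharZero F] {m l ρ S : ℕ}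
    (hm : 0 < m) (hρ : m * ρ ≤ l) (hcard : L * (K - 1) < ρ * S) {β c : F}
    (hβ : Function.Injective fun n : ℕ => β ^ n) (hc : c ≠ 0) :
    ∃ z A B : Fin K × Fin L → ℕ, (∀ ν, m * z ν = A ν + l * B ν) ∧ (∀ ν, A ν ≤ m * (ρ + L)) ∧
      (∀ ν, B ν < S) ∧ (interpMatrix K L z fun ν => β ^ A ν * c ^ B ν).det ≠ 0 := by
  choose z a ha hz using exists_mul_eq_add_mul hm l
  have hβ0 : β ≠ 0 := by
    rintro rfl
    exact absurd (@hβ 1 2 (by simp)) (by norm_num)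
  have hβm : Function.Injective fun n : ℕ => (β ^ m) ^ n := fun i j hij => by
    simp only [← pow_mul] at hij
    exact Nat.eq_of_mul_eq_mul_left hm (hβ hij)
  obtain ⟨f, hf⟩ := exists_det_submatrix_ne_zero (linearIndependent_row_interpMatrix (K := K)
    (L := L) (injective_add_of_mul_eq_add_mul hρ ha hz)
    (y := fun τ => β ^ (a τ.2 + m * τ.1) * c ^ (τ.2 : ℕ))
    (fun τ => mul_ne_zero (pow_ne_zero _ hβ0) (pow_ne_zero _ hc)) hβm (by simpa using hcard))
  refine ⟨fun i => z (f i).1.2 + (f i).1.1 + (f i).2,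
    fun i => a (f i).1.2 + m * ((f i).1.1 + (f i).2), fun i => (f i).1.2, fun i => ?_, fun i => ?_,
    fun i => (f i).1.2.2, ?_⟩
  · simp only [mul_add, hz]
    ring
  · have := ha (f i).1.2
    have := Nat.mul_le_mul_left m
      (show ((f i).1.1 : ℕ) + ((f i).2 : ℕ) + 1 ≤ ρ + L by have := (f i).1.1.2; omega)
    simp only [mul_add] at this ⊢
    omega
  · convert hf using 2
    ext i j
    simp only [interpMatrix, Matrix.submatrix_apply, Matrix.of_apply, id, ← pow_mul, mul_add,
      pow_add]
    ring

end Interpolation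

/-! ### Real parts of powers in `ℤ[√(-D)]` -/

theorem exists_zsqrtd_hom_padicInt {p : ℕ} [Fact p.Prime] {t : ℕ} (ht : t ≠ 0) {D a : ℤ}
    (h : a ^ 2 + D = (p : ℤ) ^ t) (hpa : ¬ (p : ℤ) ∣ 2 * a) :
    ∃ φ : ℤ√(-D) →+* ℤ_[p], IsUnit (φ ⟨a, 1⟩) := by
  let F : Polynomial ℤ_[p] := Polynomial.X ^ 2 + Polynomial.C (D : ℤ_[p])
  have hval : F.eval (a : ℤ_[p]) = (p : ℤ_[p]) ^ t := by
    simpa [F] using congrArg (Int.cast : ℤ → ℤ_[p]) h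
  have hder : F.derivative.eval (a : ℤ_[p]) = ((2 * a : ℤ) : ℤ_[p]) := by
    simp [F, ← one_add_one_eq_two]
  have hunit : ‖((2 * a : ℤ) : ℤ_[p])‖ = 1 :=
    (PadicInt.norm_le_one _).eq_of_not_lt fun hlt =>
      hpa ((PadicInt.norm_int_lt_one_iff_dvd _).1 hlt)
  obtain ⟨x, hx, hxa, -, -⟩ := hensels_lemma (F := F) (a := (a : ℤ_[p])) (by
    simp only [Polynomial.coe_aeval_eq_eval]
    rw [hder, hunit, hval, norm_pow, one_pow]
    exact pow_lt_one₀ (norm_nonneg _) Padic.norm_p_lt_one ht)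
  simp only [Polynomial.coe_aeval_eq_eval, hder, hunit] at hxa
  have hx2 : x * x = ((-D : ℤ) : ℤ_[p]) := by
    have : x ^ 2 + (D : ℤ_[p]) = 0 := by simpa [F] using hx
    push_cast
    linear_combination this
  refine ⟨Zsqrtd.lift ⟨x, hx2⟩, PadicInt.isUnit_iff.2 ?_⟩
  have hβ : (Zsqrtd.lift ⟨x, hx2⟩ (⟨a, 1⟩ : ℤ√(-D)) : ℤ_[p]) =
      (x - a) + ((2 * a : ℤ) : ℤ_[p]) := by
    simp [Zsqrtd.lift]
    ring
  rw [hβ, PadicInt.norm_add_eq_max_of_ne (by rw [hunit]; exact hxa.ne), hunit, max_eq_right hxa.le]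

theorem exists_pow_sub_one_eq_one_add_mul {p : ℕ} [Fact p.Prime] {x : ℤ_[p]} (hx : IsUnit x) :
    ∃ h, x ^ (p - 1) = 1 + p * h := by
  have hker : PadicInt.toZMod (x ^ (p - 1) - 1) = 0 := by
    rw [map_sub, map_pow, map_one, ZMod.pow_card_sub_one_eq_one (hx.map _).ne_zero, sub_self]
  rw [← RingHom.mem_ker, PadicInt.ker_toZMod, PadicInt.maximalIdeal_eq_span_p,
    Ideal.mem_span_singleton] at hker
  obtain ⟨h, hh⟩ := hker
  exact ⟨h, by rw [← hh, add_sub_cancel]⟩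

theorem pow_dvd_pow_mul_det_interpMatrix_padicInt {p : ℕ} [Fact p.Prime] {K L E l : ℕ}
    (hE : K * L ≤ E) {x c : ℤ_[p]} (hx : IsUnit x) (hc : (p : ℤ_[p]) ^ E ∣ c - x ^ l)
    {z A B : Fin K × Fin L → ℕ} (hz : ∀ ν, (p - 1) * z ν = A ν + l * B ν) :
    (p : ℤ_[p]) ^ (∑ i ∈ Finset.range (K * L), i) ∣ (p : ℤ_[p]) ^ (L * ∑ k ∈ Finset.range K, k) *
      (interpMatrix K L z fun ν => x ^ A ν * c ^ B ν).det := by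
  obtain ⟨h, hh⟩ := exists_pow_sub_one_eq_one_add_mul hx
  refine pow_sum_range_dvd_pow_mul_det_interpMatrix (p : ℤ_[p]) h hE z fun ν => ?_
  rw [← hh, ← pow_mul, hz, pow_add, pow_mul, ← mul_sub]
  exact (hc.trans (sub_dvd_pow_sub_pow _ _ _)).mul_left _

theorem pow_dvd_pow_mul_norm_det_interpMatrix {p : ℕ} (hp : p.Prime) {t : ℕ} (ht : t ≠ 0)
    {D a : ℤ} (h : a ^ 2 + D = (p : ℤ) ^ t) (hpa : ¬ (p : ℤ) ∣ 2 * a) {l : ℕ} {c : ℤ}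
    (hc : (⟨a, 1⟩ : ℤ√(-D)) ^ l + star ⟨a, 1⟩ ^ l = c) {K L : ℕ} (hKL : K * L ≤ t * l)
    {z A B : Fin K × Fin L → ℕ} (hz : ∀ ν, (p - 1) * z ν = A ν + l * B ν) :
    (p : ℤ) ^ (∑ i ∈ Finset.range (K * L), i) ∣ (p : ℤ) ^ (L * ∑ k ∈ Finset.range K, k) *
      (interpMatrix K L z fun ν => (⟨a, 1⟩ : ℤ√(-D)) ^ A ν * c ^ B ν).det.norm := by
  have := Fact.mk hp
  obtain ⟨φ, hφ⟩ := exists_zsqrtd_hom_padicInt ht h hpa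
  set β : ℤ√(-D) := ⟨a, 1⟩ with hβ
  set Δ := (interpMatrix K L z fun ν => β ^ A ν * c ^ B ν).det
  have hnorm : φ β * φ (star β) = (p : ℤ_[p]) ^ t := by
    have : β.norm = (p : ℤ) ^ t := by rw [← h, Zsqrtd.norm_def, hβ]; ring
    rw [← map_mul, ← Zsqrtd.norm_eq_mul_conj, this, map_intCast, Int.cast_pow, Int.cast_natCast]
  have hstar : (p : ℤ_[p]) ^ (t * l) ∣ (c : ℤ_[p]) - φ β ^ l := by
    rw [← map_intCast φ, ← hc, map_add, map_pow, map_pow, add_sub_cancel_left, pow_mul]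
    exact pow_dvd_pow_of_dvd (hφ.dvd_mul_left.1 hnorm.symm.dvd) l
  have hdvd := pow_dvd_pow_mul_det_interpMatrix_padicInt hKL hφ hstar hz
  have hΔ : φ Δ = (interpMatrix K L z fun ν => φ β ^ A ν * (c : ℤ_[p]) ^ B ν).det := by
    rw [map_det_interpMatrix]
    congr 2
    ext ν
    simp
  rw [← hΔ] at hdvd
  have hdvd' := hdvd.mul_right (φ (star Δ))
  rw [mul_assoc, ← map_mul, ← Zsqrtd.norm_eq_mul_conj, map_intCast] at hdvd'
  exact_mod_cast (PadicInt.pow_p_dvd_int_iff _ ((p : ℤ) ^ (L * ∑ k ∈ Finset.range K, k) *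
    Δ.norm)).1 (by push_cast; exact hdvd')

theorem exists_zsqrtd_hom_complex {D : ℤ} (hD : 0 < D) :
    ∃ ψ : ℤ√(-D) →+* ℂ, ∀ x, ‖ψ x‖ ^ 2 = (x.norm : ℝ) := by
  have hsqrt : ((√D : ℝ) : ℂ) * (√D : ℝ) = (D : ℂ) := by
    rw [← Complex.ofReal_mul, Real.mul_self_sqrt (by exact_mod_cast hD.le), Complex.ofReal_intCast]
  have hroot : (Complex.I * √D) * (Complex.I * √D) = ((-D : ℤ) : ℂ) := by
    push_cast
    linear_combination (-1 : ℂ) * hsqrt + ((√D : ℝ) : ℂ) ^ 2 * Complex.I_mul_I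
  refine ⟨Zsqrtd.lift ⟨_, hroot⟩, fun x => ?_⟩
  have hlift : (Zsqrtd.lift ⟨_, hroot⟩ x : ℂ) =
      ((x.re : ℝ) : ℂ) + ((x.im * √D : ℝ) : ℂ) * Complex.I := by
    simp [Zsqrtd.lift]
    ring
  rw [hlift, ← Complex.normSq_eq_norm_sq, Complex.normSq_add_mul_I, mul_pow,
    Real.sq_sqrt (by exact_mod_cast hD.le), Zsqrtd.norm_def]
  push_cast
  ring

theorem zsqrtd_norm_det_interpMatrix_le {D : ℤ} (hD : 0 < D) {K L Z q H : ℕ} (hZ : 8 * Z ≤ K * q)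
    {z : Fin K × Fin L → ℕ} (hz : ∀ ν, z ν ≤ Z) {Y : Fin K × Fin L → ℤ√(-D)}
    (hY : ∀ ν, (Y ν).norm ≤ H) :
    (interpMatrix K L z Y).det.norm ≤ ((K * L).factorial ^ 2 *
      (q ^ (2 * L * ∑ k ∈ Finset.range K, k) * H ^ (K * ∑ l ∈ Finset.range L, l)) : ℕ) := by
  obtain ⟨ψ, hψ⟩ := exists_zsqrtd_hom_complex hD
  obtain ⟨s, hs0, hs⟩ : ∃ s : ℝ, 0 ≤ s ∧ s ^ 2 = H :=
    ⟨√H, Real.sqrt_nonneg _, Real.sq_sqrt H.cast_nonneg⟩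
  have hnorm : ∀ ν, ‖(ψ ∘ Y) ν‖ ≤ s := fun ν =>
    (pow_le_pow_iff_left₀ (norm_nonneg _) hs0 two_ne_zero).1 <| by
      rw [Function.comp_apply, hψ, hs]
      exact_mod_cast hY ν
  have hdet := norm_det_interpMatrix_le (K := K) (L := L) Z.cast_nonneg (y := q)
    (by exact_mod_cast hZ) hs0 (fun ν => Nat.cast_le.2 (hz ν)) hnorm
  rw [← map_det_interpMatrix] at hdet
  rw [← Int.cast_le (R := ℝ), ← hψ]
  refine (pow_le_pow_left₀ (norm_nonneg _) hdet 2).trans_eq ?_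
  push_cast
  rw [← hs]
  ring

theorem exists_zsqrtd_det_interpMatrix_ne_zero {D : ℤ} (hD : 0 < D) {K L m l ρ S : ℕ} (hm : 0 < m)
    (hρ : m * ρ ≤ l) (hcard : L * (K - 1) < ρ * S) {β : ℤ√(-D)} (hβ : 1 < β.norm) {c : ℤ}
    (hc : c ≠ 0) :
    ∃ z A B : Fin K × Fin L → ℕ, (∀ ν, m * z ν = A ν + l * B ν) ∧ (∀ ν, A ν ≤ m * (ρ + L)) ∧
      (∀ ν, B ν < S) ∧ (interpMatrix K L z fun ν => β ^ A ν * (c : ℤ√(-D)) ^ B ν).det ≠ 0 := by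
  obtain ⟨ψ, hψ⟩ := exists_zsqrtd_hom_complex hD
  have hone : 1 < ‖ψ β‖ := by
    rw [← one_lt_sq_iff₀ (norm_nonneg _), hψ]
    exact_mod_cast hβ
  have hinj : Function.Injective fun n : ℕ => ψ β ^ n := fun i j hij =>
    pow_right_injective₀ (zero_lt_one.trans hone) hone.ne' <| by
      simpa only [norm_pow] using congrArg norm hij
  obtain ⟨z, A, B, hz, hA, hB, hdet⟩ := exists_det_interpMatrix_ne_zero hm hρ hcard hinj
    (c := (c : ℂ)) (by exact_mod_cast hc)
  refine ⟨z, A, B, hz, hA, hB, fun h0 => hdet ?_⟩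
  rw [← map_zero ψ, ← h0, map_det_interpMatrix]
  simp [Function.comp_def]

theorem le_mul_of_mul_eq_add_mul {m l q S z A B : ℕ} (hm : 0 < m) (hl : l ≤ m * q)
    (hA : A ≤ m * q) (hB : B < S) (hz : m * z = A + l * B) : z ≤ S * q := by
  refine Nat.le_of_mul_le_mul_left ?_ hm
  calc m * z ≤ m * q + m * q * B := hz.le.trans (Nat.add_le_add hA (Nat.mul_le_mul_right B hl))
    _ = m * q * (B + 1) := by ring
    _ ≤ m * q * S := Nat.mul_le_mul_left _ hB
    _ = m * (S * q) := by ring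

theorem zsqrtd_norm_pow_mul_intCast_pow_le {d c : ℤ} {β : ℤ√d} {N C A B A' B' : ℕ} (hN : 0 < N)
    (hC : 0 < C) (hβ : β.norm = N) (hc : |c| ≤ C) (hA : A ≤ A') (hB : B ≤ B') :
    (β ^ A * (c : ℤ√d) ^ B).norm ≤ (N ^ A' * C ^ (2 * B') : ℕ) := by
  have hnorm : (β ^ A * (c : ℤ√d) ^ B).norm = (N : ℤ) ^ A * |c| ^ (2 * B) := by
    change Zsqrtd.normMonoidHom _ = _
    rw [map_mul, map_pow, map_pow, pow_mul, sq_abs, sq, ← hβ, ← Zsqrtd.norm_intCast]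
    rfl
  have hN' : (1 : ℤ) ≤ N := by exact_mod_cast hN
  have hC' : (1 : ℤ) ≤ C := by exact_mod_cast hC
  rw [hnorm]
  push_cast
  calc (N : ℤ) ^ A * |c| ^ (2 * B) ≤ N ^ A * C ^ (2 * B) := by gcongr
    _ ≤ N ^ A' * C ^ (2 * B') := by gcongr

theorem pow_sum_range_le_of_pow_add_star_pow_eq {p : ℕ} (hp : p.Prime) {t : ℕ} (ht : t ≠ 0)
    {D a : ℤ} (hD : 0 < D) (h : a ^ 2 + D = (p : ℤ) ^ t) (hpa : ¬ (p : ℤ) ∣ 2 * a) {l C : ℕ}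
    {c : ℤ} (hc : (⟨a, 1⟩ : ℤ√(-D)) ^ l + star ⟨a, 1⟩ ^ l = c) (hc0 : c ≠ 0) (hcC : |c| ≤ C)
    {K L ρ S q : ℕ} (hKL : K * L ≤ t * l) (hl : l ≤ (p - 1) * q) (hρ : (p - 1) * ρ ≤ l)
    (hcard : L * (K - 1) < ρ * S) (hS : 8 * S ≤ K) (hρL : ρ + L ≤ q) :
    p ^ (∑ i ∈ Finset.range (K * L), i) ≤ p ^ (L * ∑ k ∈ Finset.range K, k) *
      ((K * L).factorial ^ 2 * (q ^ (2 * L * ∑ k ∈ Finset.range K, k) *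
        ((p ^ t) ^ ((p - 1) * (ρ + L)) * C ^ (2 * S)) ^ (K * ∑ l ∈ Finset.range L, l))) := by
  have hm : 0 < p - 1 := Nat.sub_pos_of_lt hp.one_lt
  have hC : 0 < C := by exact_mod_cast (abs_pos.2 hc0).trans_le hcC
  set β : ℤ√(-D) := ⟨a, 1⟩ with hβ
  have hβN : β.norm = (p ^ t : ℕ) := by
    push_cast
    rw [← h, Zsqrtd.norm_def, hβ]
    ring
  obtain ⟨z, A, B, hz, hA, hB, hΔ⟩ := exists_zsqrtd_det_interpMatrix_ne_zero hD hm hρ hcard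
    (β := β) (by rw [hβN]; exact_mod_cast one_lt_pow₀ hp.one_lt ht) hc0
  set Δ := (interpMatrix K L z fun ν => β ^ A ν * (c : ℤ√(-D)) ^ B ν).det
  have hpos : 0 < Δ.norm := (Zsqrtd.norm_nonneg (by omega) _).lt_of_ne' <|
    (Zsqrtd.norm_eq_zero_iff (by omega) _).not.2 hΔ
  have hZ : ∀ ν, z ν ≤ S * q := fun ν =>
    le_mul_of_mul_eq_add_mul hm hl ((hA ν).trans (Nat.mul_le_mul_left _ hρL)) (hB ν) (hz ν)
  have hupper := zsqrtd_norm_det_interpMatrix_le hD (q := q)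
    (by rw [← mul_assoc]; exact Nat.mul_le_mul_right q hS) hZ fun ν =>
    zsqrtd_norm_pow_mul_intCast_pow_le (pow_pos hp.pos t) hC hβN hcC (hA ν) (hB ν).le
  have hlower := Int.le_of_dvd (by have := hp.pos; positivity)
    (pow_dvd_pow_mul_norm_det_interpMatrix hp ht h hpa hc hKL hz)
  exact_mod_cast hlower.trans (mul_le_mul_of_nonneg_left hupper (by positivity))

theorem pow_le_of_pow_sum_range_le {p q H K L : ℕ} (hK : 0 < K) (hL : 0 < L)
    (h : p ^ (∑ i ∈ Finset.range (K * L), i) ≤ p ^ (L * ∑ k ∈ Finset.range K, k) *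
      ((K * L).factorial ^ 2 * (q ^ (2 * L * ∑ k ∈ Finset.range K, k) *
        H ^ (K * ∑ l ∈ Finset.range L, l)))) :
    p ^ (K * L - 1) ≤ p ^ (K - 1) * ((K * L) ^ 4 * (q ^ (2 * (K - 1)) * H ^ (L - 1))) := by
  refine (Nat.pow_le_pow_iff_left (Nat.mul_pos hK hL).ne').1 ?_
  calc (p ^ (K * L - 1)) ^ (K * L) = (p ^ (∑ i ∈ Finset.range (K * L), i)) ^ 2 := by
        rw [← pow_mul, ← pow_mul, Finset.sum_range_id_mul_two, mul_comm (K * L)]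
    _ ≤ _ := Nat.pow_le_pow_left h 2
    _ = p ^ (L * ((∑ k ∈ Finset.range K, k) * 2)) * ((K * L).factorial ^ 4 *
        (q ^ (2 * L * ((∑ k ∈ Finset.range K, k) * 2)) *
          H ^ (K * ((∑ l ∈ Finset.range L, l) * 2)))) := by ring
    _ ≤ p ^ (L * ((∑ k ∈ Finset.range K, k) * 2)) * (((K * L) ^ (K * L)) ^ 4 *
        (q ^ (2 * L * ((∑ k ∈ Finset.range K, k) * 2)) *
          H ^ (K * ((∑ l ∈ Finset.range L, l) * 2)))) := by
        gcongr
        exact Nat.factorial_le_pow _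
    _ = _ := by
        rw [Finset.sum_range_id_mul_two, Finset.sum_range_id_mul_two]
        simp only [mul_pow, ← pow_mul]
        congr 2 <;> ring

theorem mul_le_two_thousand_forty_eight_pow {v : ℕ} (hv : 2 ≤ v) :
    (4 * (v + 1) + 1) * (200 * (v + 1)) ≤ 2048 ^ v := by
  induction v, hv using Nat.le_induction with
  | base => norm_num
  | succ v hv ih =>
    rw [pow_succ]
    nlinarith

theorem exists_mul_pow_ge_and_mul_le {p l : ℕ} (hp : 2048 ≤ p) (hl : 2 * p ^ 2 < l) :
    ∃ w, 2 ≤ w ∧ l ≤ (p - 1) * p ^ w ∧ (4 * w + 1) * (200 * w) * (p - 1) ≤ l := by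
  have hex : ∃ w, l ≤ (p - 1) * p ^ w :=
    ⟨l, (Nat.lt_pow_self (by omega)).le.trans (Nat.le_mul_of_pos_left _ (by omega))⟩
  classical
  have hmin : ∀ v < Nat.find hex, (p - 1) * p ^ v < l := fun v hv => not_le.1 (Nat.find_min hex hv)
  have htwo : 2 ≤ Nat.find hex := by
    rw [Nat.le_find_iff]
    intro v hv hlv
    have : (p - 1) * p ^ v ≤ p * p ^ 1 :=
      Nat.mul_le_mul (Nat.sub_le _ _) (Nat.pow_le_pow_right (by omega) (by omega))
    nlinarith
  refine ⟨Nat.find hex, htwo, Nat.find_spec hex, ?_⟩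
  rcases htwo.eq_or_lt with heq | hlt
  · rw [← heq]
    nlinarith [Nat.sub_le p 1]
  · obtain ⟨v, hv⟩ := Nat.exists_eq_add_one_of_ne_zero (by omega : Nat.find hex ≠ 0)
    rw [hv] at hlt ⊢
    refine le_trans ?_ (hmin v (by omega)).le
    rw [mul_comm]
    exact Nat.mul_le_mul_left _ ((mul_le_two_thousand_forty_eight_pow (by omega)).trans
      (Nat.pow_le_pow_left hp v))

theorem mul_pow_four_le_pow {p w τ : ℕ} (hp : 2048 ≤ p) (hw : 2 ≤ w) (hτ : 0 < τ) :
    (200 * w * τ * (4 * w + 1)) ^ 4 ≤ p ^ (4 * w ^ 2 * τ) := by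
  have hX : w ^ 2 * τ ≠ 0 := by positivity
  rw [show 4 * w ^ 2 * τ = (w ^ 2 * τ) * 4 by ring, pow_mul]
  refine Nat.pow_le_pow_left ?_ 4
  calc 200 * w * τ * (4 * w + 1) ≤ 1024 * (w ^ 2 * τ) := by
        nlinarith [Nat.mul_le_mul_right (w * τ) hw]
    _ ≤ 1024 ^ (w ^ 2 * τ) * 2 ^ (w ^ 2 * τ) :=
      Nat.mul_le_mul (Nat.le_self_pow hX _) Nat.lt_two_pow_self.le
    _ = 2048 ^ (w ^ 2 * τ) := (mul_pow 1024 2 _).symm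
    _ ≤ p ^ (w ^ 2 * τ) := Nat.pow_le_pow_left hp _

theorem pow_mul_two_mul_pow_pow_le_pow {p : ℕ} (hp : 1024 ≤ p) (w τ : ℕ) :
    (p ^ (τ * (40 * w + 1)) * (2 * p) ^ (50 * w * τ)) ^ (4 * w) ≤
      p ^ ((380 * w ^ 2 + 4 * w) * τ) := by
  have htwo : 2 ^ (200 * w ^ 2 * τ) ≤ p ^ (20 * w ^ 2 * τ) := by
    rw [show 200 * w ^ 2 * τ = 10 * (20 * w ^ 2 * τ) by ring, pow_mul]
    exact Nat.pow_le_pow_left hp _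
  calc (p ^ (τ * (40 * w + 1)) * (2 * p) ^ (50 * w * τ)) ^ (4 * w) =
        p ^ ((360 * w ^ 2 + 4 * w) * τ) * 2 ^ (200 * w ^ 2 * τ) := by
        rw [mul_pow, mul_pow, mul_pow]
        ring
    _ ≤ p ^ ((360 * w ^ 2 + 4 * w) * τ) * p ^ (20 * w ^ 2 * τ) := Nat.mul_le_mul_left _ htwo
    _ = p ^ ((380 * w ^ 2 + 4 * w) * τ) := by ring

theorem mul_lt_pow_mul_sub_one {p w τ : ℕ} (hp : 2048 ≤ p) (hw : 2 ≤ w) (hτ : 0 < τ) :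
    p ^ (200 * w * τ - 1) * ((200 * w * τ * (4 * w + 1)) ^ 4 *
      ((p ^ w) ^ (2 * (200 * w * τ - 1)) *
        (p ^ (τ * (40 * w + 1)) * (2 * p) ^ (50 * w * τ)) ^ (4 * w))) <
      p ^ (200 * w * τ * (4 * w + 1) - 1) := by
  have hK : w * (2 * (200 * w * τ - 1)) ≤ 400 * w ^ 2 * τ := by
    calc w * (2 * (200 * w * τ - 1)) ≤ w * (2 * (200 * w * τ)) := by gcongr; omega
      _ = 400 * w ^ 2 * τ := by ring
  have hX : 2 * (w * τ) ≤ w ^ 2 * τ := by nlinarith [Nat.mul_le_mul_right (w * τ) hw]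
  have hK0 : 0 < w * τ := by positivity
  refine lt_of_le_of_lt (Nat.mul_le_mul_left _ (Nat.mul_le_mul (mul_pow_four_le_pow hp hw hτ)
    (Nat.mul_le_mul_left _ (pow_mul_two_mul_pow_pow_le_pow (by omega) w τ)))) ?_
  rw [← pow_mul, ← pow_add, ← pow_add, ← pow_add]
  refine Nat.pow_lt_pow_right (by omega) ?_
  ring_nf at hX hK0 hK ⊢
  omega

theorem zsqrtd_add_star {d : ℤ} (x : ℤ√d) : x + star x = ((2 * x.re : ℤ) : ℤ√d) := by
  ext <;> simp
  ring

theorem zsqrtd_pow_add_star_pow {d : ℤ} (x : ℤ√d) (l : ℕ) :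
    x ^ l + star x ^ l = ((2 * (x ^ l).re : ℤ) : ℤ√d) := by
  rw [← star_pow, zsqrtd_add_star]

theorem lt_abs_re_pow {p : ℕ} (hp : p.Prime) (hp2 : 2048 ≤ p) {t : ℕ} (ht : t ≠ 0) {D a : ℤ}
    (hD : 0 < D) (h : a ^ 2 + D = (p : ℤ) ^ t) (hpa : ¬ (p : ℤ) ∣ 2 * a) {l : ℕ}
    (hl : 2 * p ^ 2 < l) (hre : ((⟨a, 1⟩ : ℤ√(-D)) ^ l).re ≠ 0) :
    p < |((⟨a, 1⟩ : ℤ√(-D)) ^ l).re| := by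
  by_contra! hcp
  -- With `τ = t(p - 1)`, the determinant of size `K = 200wτ`, `L = 4w + 1` at nodes indexed by
  -- `ρ = 36w`, `S = 25wτ` is divisible by a power of `p` exceeding its archimedean size.
  obtain ⟨w, hw, hlw, hwl⟩ := exists_mul_pow_ge_and_mul_le hp2 hl
  obtain ⟨τ, hτ⟩ : ∃ τ, τ = t * (p - 1) := ⟨_, rfl⟩
  have hτ0 : 0 < τ := hτ ▸ Nat.mul_pos (Nat.pos_of_ne_zero ht) (by omega)
  have hK0 : 0 < 200 * w * τ := by positivity
  have hcard : (4 * w + 1) * (200 * w * τ - 1) < 36 * w * (25 * w * τ) := by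
    calc (4 * w + 1) * (200 * w * τ - 1) < (4 * w + 1) * (200 * w * τ) :=
          Nat.mul_lt_mul_of_pos_left (by omega) (by omega)
      _ = (4 * w + 1) * 200 * (w * τ) := by ring
      _ ≤ 36 * w * 25 * (w * τ) := Nat.mul_le_mul_right _ (by omega)
      _ = 36 * w * (25 * w * τ) := by ring
  have hcoord : 36 * w + (4 * w + 1) ≤ p ^ w := by
    refine le_trans ?_ ((mul_le_two_thousand_forty_eight_pow hw).trans (Nat.pow_le_pow_left hp2 w))
    nlinarith
  have hle := pow_sum_range_le_of_pow_add_star_pow_eq hp ht hD h hpa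
    (zsqrtd_pow_add_star_pow _ l) (mul_ne_zero two_ne_zero hre) (C := 2 * p)
    (by rw [abs_mul]; push_cast; exact mul_le_mul_of_nonneg_left hcp zero_le_two)
    (K := 200 * w * τ) (S := 25 * w * τ)
    (by rw [hτ]; nlinarith [Nat.mul_le_mul_left t hwl]) hlw (by nlinarith) hcard
    (by nlinarith) hcoord
  have hlt := mul_lt_pow_mul_sub_one hp2 hw hτ0
  refine hlt.not_ge ((pow_le_of_pow_sum_range_le hK0 (by omega) hle).trans_eq ?_)
  rw [Nat.add_sub_cancel, ← pow_mul p t, ← mul_assoc t, ← hτ]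
  ring_nf

theorem two_thousand_forty_eight_le_of_wieferich {p : ℕ} (hmod : p % 4 = 3)
    (hw : 2 ^ (p - 1) ≡ 1 [MOD p ^ 2]) : 2048 ≤ p := by
  by_contra! hlt
  have hcheck : ∀ p < 2048, p % 4 = 3 → 2 ^ (p - 1) % p ^ 2 ≠ 1 := by decide +kernel
  refine hcheck p hlt hmod ?_
  rw [hw, Nat.mod_eq_of_lt (Nat.one_lt_pow two_ne_zero (by omega))]

theorem mul_dvd_add_pow_sub {R : Type*} [CommRing R] (x y : R) {l : ℕ} (hl : l ≠ 0) :
    x * y ∣ (x + y) ^ l - (x ^ l + y ^ l) := by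
  obtain ⟨k, rfl⟩ := Nat.exists_eq_add_one_of_ne_zero hl
  clear hl
  induction k with
  | zero => simp
  | succ k ih =>
    obtain ⟨d, hd⟩ := ih
    exact ⟨(x + y) * d + (x ^ k + y ^ k), by linear_combination (x + y) * hd⟩

theorem pow_dvd_of_pow_succ_dvd_pow_sub_one {p : ℕ} (hp : p.Prime) (hodd : Odd p) {x : ℤ}
    (hx : (p : ℤ) ∣ x - 1) (hx2 : ¬ (p : ℤ) ^ 2 ∣ x - 1) {j k : ℕ}
    (h : (p : ℤ) ^ (j + 1) ∣ x ^ k - 1) : p ^ j ∣ k := by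
  have := Fact.mk hp
  have hpx : ¬ (p : ℤ) ∣ x := fun hd =>
    (Nat.prime_iff_prime_int.1 hp).not_dvd_one ((dvd_sub_right hd).1 hx)
  have hlte := Int.emultiplicity_pow_sub_pow hp hodd hx hpx k
  have hone : emultiplicity (p : ℤ) (x - 1) = 1 := by
    simpa using emultiplicity_eq_of_dvd_of_not_dvd (k := 1) (by simpa using hx) hx2
  rw [one_pow, hone] at hlte
  rw [pow_dvd_iff_le_emultiplicity, hlte, Nat.cast_add, Nat.cast_one, add_comm] at h
  rw [pow_dvd_iff_le_emultiplicity]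
  exact (ENat.add_le_add_iff_left ENat.one_ne_top).1 h

theorem two_mul_sq_lt_of_pow_modEq {p : ℕ} (hp : p.Prime) (hodd : Odd p) {x : ℤ}
    (hx : x ≡ 1 [ZMOD p]) (hx2 : ¬ x ≡ 1 [ZMOD p ^ 2]) {l : ℕ} (hl : Odd l) (hl1 : l ≠ 1)
    (h : x ^ l ≡ x [ZMOD p ^ 3]) : 2 * p ^ 2 < l := by
  obtain ⟨j, rfl⟩ := hl
  have hcop : IsCoprime ((p : ℤ) ^ 3) x := by
    refine IsCoprime.pow_left ?_
    obtain ⟨y, hy⟩ := hx.symm.dvd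
    exact ⟨-y, 1, by linear_combination hy⟩
  have hdvd : p ^ 2 ∣ 2 * j := by
    refine pow_dvd_of_pow_succ_dvd_pow_sub_one hp hodd hx.symm.dvd
      (fun hd => hx2 (Int.modEq_iff_dvd.2 hd).symm) (hcop.dvd_of_dvd_mul_right ?_)
    rw [sub_mul, one_mul, ← pow_succ]
    exact h.symm.dvd
  have hj : p ^ 2 ∣ j :=
    (Nat.Coprime.pow_left 2 (Nat.coprime_two_right.2 hodd)).dvd_of_dvd_mul_left hdvd
  have := Nat.le_of_dvd (by omega) hj
  omega

theorem dvd_re_pow {d : ℤ} (x : ℤ√d) {l : ℕ} (hl : Odd l) : x.re ∣ (x ^ l).re := by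
  have hdvd := hl.add_dvd_pow_add_pow x (star x)
  rw [zsqrtd_add_star, zsqrtd_pow_add_star_pow, Zsqrtd.intCast_dvd_intCast] at hdvd
  exact Int.dvd_of_mul_dvd_mul_left two_ne_zero hdvd

theorem norm_dvd_two_mul_re_pow_sub {d : ℤ} (x : ℤ√d) {l : ℕ} (hl : l ≠ 0) :
    x.norm ∣ (2 * x.re) ^ l - 2 * (x ^ l).re := by
  have hdvd := mul_dvd_add_pow_sub x (star x) hl
  rw [zsqrtd_add_star, zsqrtd_pow_add_star_pow, ← Zsqrtd.norm_eq_mul_conj] at hdvd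
  exact_mod_cast hdvd

theorem two_mul_abs_re_pow_modEq {d : ℤ} (x : ℤ√d) {l e : ℕ} (hl : l ≠ 0) (he : Even e) :
    ((2 * |x.re|) ^ e) ^ l ≡ (2 * |(x ^ l).re|) ^ e [ZMOD x.norm] := by
  have hmod := (Int.modEq_iff_dvd.2 (norm_dvd_two_mul_re_pow_sub x hl)).symm.pow e
  rwa [pow_right_comm, ← he.pow_abs, ← he.pow_abs (2 * _), abs_mul, abs_mul, abs_two] at hmod

theorem int_dvd_prime_iff {a : ℤ} {q : ℕ} (hq : q.Prime) : a ∣ q ↔ |a| = 1 ∨ |a| = q := by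
  rw [← Int.natAbs_dvd_natAbs, Int.natAbs_natCast, Nat.dvd_prime hq, Int.abs_eq_natAbs]
  norm_cast

theorem abs_re_pow_ne {p q : ℕ} (hp : p.Prime) (hmod : p % 4 = 3)
    (hw : 2 ^ (p - 1) ≡ 1 [MOD p ^ 2]) (hq : q.Prime) (hqp : q < p)
    (hqw : ¬ q ^ (p - 1) ≡ 1 [MOD p ^ 2]) {t : ℕ} (ht : 3 ≤ t) {D a : ℤ} (hD : 0 < D)
    (h : a ^ 2 + D = (p : ℤ) ^ t) {l : ℕ} (hl : Odd l) (hl1 : l ≠ 1) :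
    |((⟨a, 1⟩ : ℤ√(-D)) ^ l).re| ≠ q := by
  intro hre
  have hp2 := two_thousand_forty_eight_le_of_wieferich hmod hw
  have hw' : (2 : ℤ) ^ (p - 1) ≡ 1 [ZMOD p ^ 2] := by exact_mod_cast hw
  have h2qw : ¬ (2 * q : ℤ) ^ (p - 1) ≡ 1 [ZMOD p ^ 2] := fun hc => hqw <| by
    have h1q := (hw'.mul_right ((q : ℤ) ^ (p - 1))).symm
    rw [one_mul, ← mul_pow] at h1q
    exact_mod_cast h1q.trans hc
  have hcong : ((2 * |a|) ^ (p - 1)) ^ l ≡ (2 * q) ^ (p - 1) [ZMOD p ^ 3] := by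
    have hnorm : (⟨a, 1⟩ : ℤ√(-D)).norm = (p : ℤ) ^ t := by
      rw [← h, Zsqrtd.norm_def]
      ring
    rw [← hre]
    exact (two_mul_abs_re_pow_modEq ⟨a, 1⟩ hl.pos.ne' (Nat.even_iff.2 (by omega))).of_dvd
      (hnorm ▸ pow_dvd_pow _ ht)
  have ha := dvd_re_pow (⟨a, 1⟩ : ℤ√(-D)) hl
  rw [← dvd_abs, hre] at ha
  rcases (int_dvd_prime_iff hq).1 ha with ha1 | haq
  · rw [ha1, mul_one] at hcong
    refine h2qw ((hcong.symm.of_dvd (pow_dvd_pow _ (by norm_num))).trans ?_)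
    simpa using hw'.pow l
  · rw [haq] at hcong
    have hp2q : ¬ (p : ℤ) ∣ 2 * q := fun hd =>
      (hp.dvd_mul.1 (by exact_mod_cast hd)).elim (Nat.not_dvd_of_pos_of_lt two_pos (by omega))
        (Nat.not_dvd_of_pos_of_lt hq.pos hqp)
    have hfermat := Int.ModEq.pow_card_sub_one_eq_one hp
      ((Nat.prime_iff_prime_int.1 hp).coprime_iff_not_dvd.2 hp2q).symm
    have hlarge := two_mul_sq_lt_of_pow_modEq hp (hp.odd_of_ne_two (by omega)) hfermat h2qw hl hl1
      hcong
    have := lt_abs_re_pow hp hp2 (by omega) hD h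
      (by rwa [← dvd_abs, abs_mul, haq, abs_two]) hlarge
      (abs_pos.1 (hre ▸ Nat.cast_pos.2 hq.pos))
    omega

/-! ### Imaginary quadratic fields -/

open IntermediateField NumberField

theorem exists_ratCast_add_mul_eq {K : Type*} [Field K] [CharZero K] {z : K} {m : ℤ}
    (hz : z ^ 2 = m) (htop : ℚ⟮z⟯ = ⊤) (x : K) : ∃ u v : ℚ, x = u + v * z := by
  have hint : IsIntegral ℚ z :=
    .of_pow two_pos (by simpa [hz] using isIntegral_algebraMap (R := ℚ) (A := K) (x := (m : ℚ)))
  have hx : x ∈ ℚ⟮z⟯.toSubalgebra := htop ▸ trivial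
  rw [IntermediateField.adjoin_simple_toSubalgebra_of_isAlgebraic hint.isAlgebraic] at hx
  induction hx using Algebra.adjoin_induction with
  | mem y hy => exact ⟨0, 1, by simp [Set.mem_singleton_iff.mp hy]⟩
  | algebraMap r => exact ⟨r, 0, by simp⟩
  | add x y _ _ hx hy =>
    obtain ⟨u, v, rfl⟩ := hx
    obtain ⟨u', v', rfl⟩ := hy
    exact ⟨u + u', v + v', by push_cast; ring⟩
  | mul x y _ _ hx hy =>
    obtain ⟨u, v, rfl⟩ := hx
    obtain ⟨u', v', rfl⟩ := hy
    exact ⟨u * u' + v * v' * m, u * v' + v * u', by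
      push_cast; linear_combination ((v : K) * v') * hz⟩

open Polynomial in
theorem finrank_le_two_of_sq_eq_intCast {K : Type*} [Field K] [CharZero K] {z : K} {m : ℤ}
    (hz : z ^ 2 = m) (htop : ℚ⟮z⟯ = ⊤) : Module.finrank ℚ K ≤ 2 := by
  have hmonic : (X ^ 2 - C (m : ℚ)).Monic := monic_X_pow_sub_C _ two_ne_zero
  have hroot : aeval z (X ^ 2 - C (m : ℚ)) = 0 := by simp [hz]
  rw [← IntermediateField.finrank_top', ← htop,
    IntermediateField.adjoin.finrank ⟨_, hmonic, hroot⟩,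
    ← natDegree_X_pow_sub_C (n := 2) (r := (m : ℚ))]
  exact natDegree_le_of_dvd (minpoly.dvd _ _ hroot) hmonic.ne_zero

theorem re_eq_zero_of_sq_eq_intCast {w : ℂ} {m : ℤ} (hm : m < 0) (hw : w ^ 2 = m) :
    w.re = 0 := by
  have him : w.re * w.im = 0 := by
    have := congrArg Complex.im hw
    simp only [sq, Complex.mul_im, Complex.intCast_im] at this
    linarith
  refine (mul_eq_zero.mp him).resolve_right fun h0 => ?_
  have hre := congrArg Complex.re hw
  simp only [sq, Complex.mul_re, Complex.intCast_re, h0] at hre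
  have : (m : ℝ) < 0 := by exact_mod_cast hm
  nlinarith [mul_self_nonneg w.re]

theorem not_odd_of_eq_sq_mul {X m : ℤ} (hm : m % 4 = 2) {r : ℚ} (h : (X : ℚ) = r ^ 2 * m) :
    ¬ Odd X := by
  intro hX
  have hden : (X : ℚ) * r.den ^ 2 = r.num ^ 2 * m := by
    rw [h, mul_right_comm, ← mul_pow, Rat.mul_den_eq_num]
  have hden' : X * (r.den : ℤ) ^ 2 = r.num ^ 2 * m := by exact_mod_cast hden
  have heven : Even (r.den : ℤ) := by
    have : Even (X * (r.den : ℤ) ^ 2) := hden' ▸ (Int.even_iff.mpr (by omega)).mul_left _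
    simpa [Int.even_mul, Int.not_even_iff_odd.mpr hX, Int.even_pow] using this
  have hnum : Odd r.num := by
    by_contra hnum
    rw [Int.not_odd_iff_even] at hnum
    have := Nat.dvd_gcd (Int.natCast_dvd.mp hnum.two_dvd)
      (Int.natCast_dvd_natCast.mp heven.two_dvd)
    rw [r.reduced.gcd_eq_one] at this
    exact absurd this (by decide)
  obtain ⟨e, he⟩ := heven.two_dvd
  obtain ⟨k, hk⟩ := hnum
  have hmod : m = 4 * (X * e ^ 2 - (k ^ 2 + k) * m) := by
    rw [he, hk] at hden'
    linear_combination -hden'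
  omega

theorem re_map_ratCast_add_mul {K : Type*} [Field K] (f : K →+* ℂ) {z : K} {m : ℤ} (hm : m < 0)
    (hz : z ^ 2 = m) (u v : ℚ) : (f (u + v * z)).re = u := by
  have := re_eq_zero_of_sq_eq_intCast hm (w := f z) (by rw [← map_pow, hz, map_intCast])
  simp [this]

theorem normSq_map_ratCast_add_mul {K : Type*} [Field K] (f : K →+* ℂ) {z : K} {m : ℤ}
    (hm : m < 0) (hz : z ^ 2 = m) (u v : ℚ) :
    Complex.normSq (f (u + v * z)) = u ^ 2 - v ^ 2 * m := by
  have hfz : f z ^ 2 = m := by rw [← map_pow, hz, map_intCast]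
  have hre := re_eq_zero_of_sq_eq_intCast hm hfz
  have him : (f z).im ^ 2 = -m := by
    have := congrArg Complex.re hfz
    simp only [sq, Complex.mul_re, Complex.intCast_re, hre] at this
    linarith [sq (f z).im]
  simp only [map_add, map_mul, map_ratCast, Complex.normSq_apply, Complex.add_re, Complex.mul_re,
    Complex.add_im, Complex.mul_im, Complex.ratCast_re, Complex.ratCast_im, hre]
  linear_combination (v : ℝ) ^ 2 * him

theorem exists_intCast_eq_of_isIntegral {r : ℚ} {A : Type*} [Field A] [CharZero A]
    (h : IsIntegral ℤ (r : A)) : ∃ k : ℤ, (k : ℚ) = r :=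
  IsIntegrallyClosed.isIntegral_iff.mp <|
    (isIntegral_algebraMap_iff (A := ℚ) (B := A) (algebraMap ℚ A).injective).mp (by simpa using h)

open ComplexConjugate in
-- Since `m ≡ 2 [ZMOD 4]`, the ring of integers of `ℚ(√m)` has no half-integral elements.
theorem exists_intCast_add_mul_eq_of_isIntegral {K : Type*} [Field K] [CharZero K] (f : K →+* ℂ)
    {z : K} {m : ℤ} (hm : m < 0) (hm4 : m % 4 = 2) (hz : z ^ 2 = m) (htop : ℚ⟮z⟯ = ⊤) {x : K}
    (hx : IsIntegral ℤ x) : ∃ (a D : ℤ) (v : ℚ), x = a + v * z ∧ v ^ 2 * m = -D := by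
  obtain ⟨u, v, rfl⟩ := exists_ratCast_add_mul_eq hz htop x
  have hint : IsIntegral ℤ (f (u + v * z)) := map_isIntegral_int f hx
  have hint' : IsIntegral ℤ (conj (f (u + v * z))) := map_isIntegral_int (starRingEnd ℂ) hint
  obtain ⟨T, hT⟩ : ∃ T : ℤ, (T : ℚ) = 2 * u := by
    refine exists_intCast_eq_of_isIntegral (A := ℂ) ?_
    have := hint.add hint'
    rw [Complex.add_conj, re_map_ratCast_add_mul f hm hz] at this
    exact_mod_cast this
  obtain ⟨N, hN⟩ : ∃ N : ℤ, (N : ℚ) = u ^ 2 - v ^ 2 * m := by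
    refine exists_intCast_eq_of_isIntegral (A := ℂ) ?_
    have := hint.mul hint'
    rw [Complex.mul_conj, normSq_map_ratCast_add_mul f hm hz] at this
    exact_mod_cast this
  have hdisc : ¬ Odd (T ^ 2 - 4 * N) :=
    not_odd_of_eq_sq_mul hm4 (r := 2 * v) (by push_cast; rw [hT, hN]; ring)
  obtain ⟨a, rfl⟩ : Even T := by
    by_contra hodd
    exact hdisc ((Int.not_even_iff_odd.mp hodd).pow.sub_even ⟨2 * N, by ring⟩)
  obtain rfl : u = a := by push_cast at hT; linarith
  exact ⟨a, N - a ^ 2, v, by push_cast; ring, by push_cast; rw [hN]; ring⟩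

theorem nonneg_of_sq_mul_eq_neg {m D : ℤ} (hm : m < 0) {v : ℚ} (h : v ^ 2 * m = -D) : 0 ≤ D := by
  have : v ^ 2 * m ≤ 0 :=
    mul_nonpos_of_nonneg_of_nonpos (sq_nonneg v) (by exact_mod_cast hm.le)
  exact_mod_cast (by linarith : (0 : ℚ) ≤ D)

theorem normSq_map_intCast_add_mul {K : Type*} [Field K] (f : K →+* ℂ) {z : K} {m a D : ℤ}
    (hm : m < 0) (hz : z ^ 2 = m) {v : ℚ} (h : v ^ 2 * m = -D) :
    Complex.normSq (f (a + v * z)) = (a ^ 2 + D : ℤ) := by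
  have hnorm := normSq_map_ratCast_add_mul f hm hz a v
  have h' : (v : ℝ) ^ 2 * m = -D := by exact_mod_cast h
  rw [h'] at hnorm
  push_cast at hnorm ⊢
  rw [hnorm, sub_neg_eq_add]

theorem unit_eq_one_or_neg_one {K : Type*} [Field K] [NumberField K] {z : K} {m : ℤ} (hm : m < 0)
    (hm4 : m % 4 = 2) (hz : z ^ 2 = m) (htop : ℚ⟮z⟯ = ⊤) (u : (𝓞 K)ˣ) : u = 1 ∨ u = -1 := by
  obtain ⟨f⟩ : Nonempty (K →+* ℂ) := inferInstance
  have hnorm (x : 𝓞 K) : ∃ (a D : ℤ) (v : ℚ), (x : K) = a + v * z ∧ v ^ 2 * m = -D ∧ 0 ≤ D ∧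
      Complex.normSq (f (x : K)) = (a ^ 2 + D : ℤ) := by
    obtain ⟨a, D, v, hx, hv⟩ := exists_intCast_add_mul_eq_of_isIntegral f hm hm4 hz htop
      (x := (x : K)) x.isIntegral_coe
    exact ⟨a, D, v, hx, hv, nonneg_of_sq_mul_eq_neg hm hv,
      by rw [hx, normSq_map_intCast_add_mul f hm hz hv]⟩
  obtain ⟨a, D, v, hu, hv, hD, hN⟩ := hnorm u
  obtain ⟨a', D', -, -, -, -, hN'⟩ := hnorm ↑u⁻¹
  have hmul : (a ^ 2 + D) * (a' ^ 2 + D') = 1 := by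
    have : Complex.normSq (f (u : 𝓞 K)) * Complex.normSq (f (↑u⁻¹ : 𝓞 K)) = 1 := by
      rw [← map_mul, ← map_mul, ← map_mul, Units.mul_inv, map_one, map_one, map_one]
    rw [hN, hN'] at this
    exact_mod_cast this
  have hone : a ^ 2 + D = 1 := Int.eq_one_of_mul_eq_one_right (by positivity) hmul
  have hD0 : D = 0 := by
    have hD1 : D ≤ 1 := by linarith [sq_nonneg a]
    refine (show D = 0 ∨ D = 1 by omega).resolve_right ?_
    rintro rfl
    exact not_odd_of_eq_sq_mul hm4 (X := -1) (by rw [hv]; simp) (by decide)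
  have hv0 : v = 0 := by simpa [hD0, hm.ne] using hv
  rcases sq_eq_one_iff.mp (by linarith : a ^ 2 = 1) with rfl | rfl
  · exact .inl (Units.ext (RingOfIntegers.coe_injective (by simp [hu, hv0])))
  · exact .inr (Units.ext (RingOfIntegers.coe_injective (by simp [hu, hv0])))

theorem re_map_pow_eq_zsqrtd_re {K : Type*} [Field K] (f : K →+* ℂ) {z : K} {m a D : ℤ}
    (hm : m < 0) (hz : z ^ 2 = m) {v : ℚ} (h : v ^ 2 * m = -D) (l : ℕ) :
    (f ((a + v * z) ^ l)).re = ((⟨a, 1⟩ : ℤ√(-D)) ^ l).re := by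
  have : CharZero K := f.charZero
  have hroot : v * z * (v * z) = ((-D : ℤ) : K) := by
    have h' : (v : K) ^ 2 * m = -D := by exact_mod_cast congrArg (Rat.cast : ℚ → K) h
    push_cast
    linear_combination (v : K) ^ 2 * hz + h'
  have hlift (w : ℤ√(-D)) :
      Zsqrtd.lift ⟨v * z, hroot⟩ w = ((w.re : ℚ) : K) + (v * w.im : ℚ) * z := by
    simp only [Zsqrtd.lift_apply_apply]
    push_cast
    ring
  have hbase : (a + v * z : K) = Zsqrtd.lift ⟨v * z, hroot⟩ ⟨a, 1⟩ := by simp [hlift]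
  rw [hbase, ← map_pow, hlift, re_map_ratCast_add_mul f hm hz, Rat.cast_intCast]

theorem sq_sub_pow_neg {p q n : ℕ} (hqp : q < p) (hn : 1 < n) : (q : ℤ) ^ 2 - (p : ℤ) ^ n < 0 := by
  have : q ^ 2 < p ^ n :=
    (Nat.pow_lt_pow_left hqp two_ne_zero).trans_le (Nat.pow_le_pow_right (by omega) hn)
  exact sub_neg.mpr (by exact_mod_cast this)

theorem pow_modEq_neg_one_of_odd {p n : ℕ} (hp : p % 4 = 3) (hn : Odd n) :
    (p : ℤ) ^ n ≡ -1 [ZMOD 4] := by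
  have hp4 : (p : ℤ) ≡ -1 [ZMOD 4] := by unfold Int.ModEq; omega
  simpa [hn.neg_one_pow] using hp4.pow n

theorem sq_sub_pow_emod_four {p q n : ℕ} (hp : p % 4 = 3) (hq : Odd q) (hn : Odd n) :
    ((q : ℤ) ^ 2 - (p : ℤ) ^ n) % 4 = 2 := by
  have hq4 : (q : ℤ) ^ 2 ≡ 1 [ZMOD 4] := Int.sq_mod_four_eq_one_of_odd (by exact_mod_cast hq)
  exact hq4.sub (pow_modEq_neg_one_of_odd hp hn)

theorem sq_ne_pow_of_odd {p n : ℕ} (hp : p % 4 = 3) (hn : Odd n) (a : ℤ) :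
    a ^ 2 ≠ (p : ℤ) ^ n := by
  intro h
  have hmod : (p : ℤ) ^ n % 4 = 3 := pow_modEq_neg_one_of_odd hp hn
  rw [← h] at hmod
  rcases Int.even_or_odd a with ha | ha
  · obtain ⟨k, rfl⟩ := ha.two_dvd
    rw [mul_pow] at hmod
    omega
  · rw [Int.sq_mod_four_eq_one_of_odd ha] at hmod
    omega

theorem abs_re_map_pow_ne {p q : ℕ} (hp : p.Prime) (hmod : p % 4 = 3)
    (hw : 2 ^ (p - 1) ≡ 1 [MOD p ^ 2]) (hq : q.Prime) (hqp : q < p)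
    (hqw : ¬ q ^ (p - 1) ≡ 1 [MOD p ^ 2]) {l t : ℕ} (hl : Odd l) (hl1 : l ≠ 1) (ht : Odd t)
    (ht1 : t ≠ 1) {K : Type*} [Field K] [CharZero K] (f : K →+* ℂ) {z : K} {m : ℤ} (hm : m < 0)
    (hm4 : m % 4 = 2) (hz : z ^ 2 = m) (htop : ℚ⟮z⟯ = ⊤) {β : K} (hβ : IsIntegral ℤ β)
    (hnorm : Complex.normSq (f β) = (p : ℝ) ^ t) : |(f (β ^ l)).re| ≠ q := by
  have ht3 : 3 ≤ t := by obtain ⟨j, rfl⟩ := ht; omega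
  obtain ⟨a, D, v, rfl, hv⟩ := exists_intCast_add_mul_eq_of_isIntegral f hm hm4 hz htop hβ
  have haD : a ^ 2 + D = (p : ℤ) ^ t := by
    rw [normSq_map_intCast_add_mul f hm hz hv] at hnorm
    exact_mod_cast hnorm
  have hD : 0 < D := by
    refine (nonneg_of_sq_mul_eq_neg hm hv).lt_of_ne' ?_
    rintro rfl
    exact sq_ne_pow_of_odd hmod ht a (by simpa using haD)
  rw [re_map_pow_eq_zsqrtd_re f hm hz hv]
  exact_mod_cast abs_re_pow_ne hp hmod hw hq hqp hqw ht3 hD haD hl hl1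

theorem pow_mul_unit_ne {p q : ℕ} (hp : p.Prime) (hmod : p % 4 = 3)
    (hw : 2 ^ (p - 1) ≡ 1 [MOD p ^ 2]) (hq : q.Prime) (hq2 : Odd q) (hqp : q < p)
    (hqw : ¬ q ^ (p - 1) ≡ 1 [MOD p ^ 2]) {l t : ℕ} (hl : Odd l) (hl1 : l ≠ 1) (ht : Odd t)
    (ht1 : t ≠ 1) {K : Type*} [Field K] [NumberField K] {ω : 𝓞 K}
    (hω : ω ^ 2 = (q : 𝓞 K) ^ 2 - (p : 𝓞 K) ^ (l * t)) (htop : ℚ⟮(ω : K)⟯ = ⊤)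
    (β : 𝓞 K) (u : (𝓞 K)ˣ) :
    β ^ l * u ≠ q + ω := by
  intro hβ
  obtain ⟨f⟩ : Nonempty (K →+* ℂ) := inferInstance
  set m : ℤ := (q : ℤ) ^ 2 - (p : ℤ) ^ (l * t) with hmdef
  have hlt : 1 < l * t :=
    (lt_of_le_of_ne hl.pos hl1.symm).trans_le (Nat.le_mul_of_pos_right l ht.pos)
  have hm : m < 0 := sq_sub_pow_neg hqp hlt
  have hm4 : m % 4 = 2 := sq_sub_pow_emod_four hmod hq2 (hl.mul ht)
  have hωm : (ω : K) ^ 2 = m := by rw [← map_pow, hω, hmdef]; simp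
  have hcoe : (q + ω : K) = ((q : ℚ) : K) + (1 : ℚ) * ω := by simp
  have hre : (f (q + ω)).re = q := by
    rw [hcoe, re_map_ratCast_add_mul f hm hωm, Rat.cast_natCast]
  have hnorm : Complex.normSq (f (q + ω)) = (p : ℝ) ^ (l * t) := by
    rw [hcoe, normSq_map_ratCast_add_mul f hm hωm, hmdef]; push_cast; ring
  have hβK : (β : K) ^ l = q + ω ∨ (β : K) ^ l = -(q + ω) := by
    have := congrArg (algebraMap (𝓞 K) K) hβ
    rcases unit_eq_one_or_neg_one hm hm4 hωm htop u with rfl | rfl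
    · left; simpa using this
    · right; rw [← neg_eq_iff_eq_neg]; simpa using this
  have hnormβ : Complex.normSq (f (β : K)) = (p : ℝ) ^ t := by
    refine (pow_left_inj₀ (Complex.normSq_nonneg _) (by positivity) hl.pos.ne').mp ?_
    rw [← map_pow, ← map_pow, ← pow_mul, mul_comm t, ← hnorm]
    rcases hβK with h | h <;> simp only [h, map_neg, Complex.normSq_neg]
  refine abs_re_map_pow_ne hp hmod hw hq hqp hqw hl hl1 ht ht1 f hm hm4 hωm htop
    (β := (β : K)) β.isIntegral_coe hnormβ ?_
  rcases hβK with h | h <;> simp only [h, map_neg, Complex.neg_re, abs_neg, hre, Nat.abs_cast]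

/-! ### Ideal classes over `p` -/

section SpanPair

variable {R : Type*} [CommRing R] {p α α' : R}

theorem span_pair_mul_span_pair_eq (h : p ∣ α * α') (hco : IsCoprime p (α + α')) :
    Ideal.span {p, α} * Ideal.span {p, α'} = Ideal.span {p} := by
  apply le_antisymm
  · rw [Ideal.span_pair_mul_span_pair, Ideal.span_le]
    rintro x (rfl | rfl | rfl | rfl) <;> rw [SetLike.mem_coe, Ideal.mem_span_singleton]
    · exact dvd_mul_right _ _
    · exact dvd_mul_right _ _
    · exact dvd_mul_left _ _
    · exact h
  · rw [Ideal.span_singleton_le_iff_mem, Ideal.span_pair_mul_span_pair]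
    obtain ⟨x, y, hxy⟩ := hco
    have hmem : x * (p * p) + (y * (p * α') + y * (α * p)) ∈
        Ideal.span {p * p, p * α', α * p, α * α'} :=
      add_mem (Ideal.mul_mem_left _ _ (Ideal.subset_span (by simp)))
        (add_mem (Ideal.mul_mem_left _ _ (Ideal.subset_span (by simp)))
          (Ideal.mul_mem_left _ _ (Ideal.subset_span (by simp))))
    rwa [show x * (p * p) + (y * (p * α') + y * (α * p)) = p by linear_combination p * hxy] at hmem

theorem span_pair_pow_le (p α : R) (n : ℕ) :
    Ideal.span {p, α} ^ n ≤ Ideal.span {p ^ n, α} := by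
  induction n with
  | zero => simp [Ideal.eq_top_of_unit_mem (Ideal.span {1, α}) 1 1 (Ideal.subset_span (by simp))]
  | succ n ih =>
    rw [pow_succ]
    refine (Ideal.mul_mono_left ih).trans ?_
    rw [Ideal.span_pair_mul_span_pair, Ideal.span_le]
    rintro x (rfl | rfl | rfl | rfl)
    · exact Ideal.subset_span (by simp [pow_succ])
    · exact Ideal.mul_mem_left _ _ (Ideal.subset_span (by simp))
    · exact Ideal.mul_mem_right _ _ (Ideal.subset_span (by simp))
    · exact Ideal.mul_mem_left _ _ (Ideal.subset_span (by simp))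

theorem isCoprime_span_pair_span_singleton (hco : IsCoprime p (α + α')) :
    IsCoprime (Ideal.span {p, α}) (Ideal.span {α'}) := by
  rw [Ideal.isCoprime_iff_exists]
  obtain ⟨x, y, hxy⟩ := hco
  exact ⟨x * p + y * α, Ideal.mem_span_pair.mpr ⟨x, y, rfl⟩, y * α',
    Ideal.mul_mem_left _ _ (Ideal.mem_span_singleton_self _), by linear_combination hxy⟩

theorem span_pair_pow_eq_span_singleton {n : ℕ} (h : α * α' = p ^ n)
    (hco : IsCoprime p (α + α')) : Ideal.span {p, α} ^ n = Ideal.span {α} := by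
  apply le_antisymm
  · refine (span_pair_pow_le p α n).trans ?_
    rw [Ideal.span_le, Set.pair_subset_iff]
    exact ⟨Ideal.mem_span_singleton.mpr ⟨α', h.symm⟩, Ideal.mem_span_singleton_self α⟩
  · rw [Ideal.span_singleton_le_iff_mem]
    obtain ⟨e, he, c, hc, hec⟩ := Ideal.isCoprime_iff_exists.mp
      ((isCoprime_span_pair_span_singleton hco).pow_left (m := n))
    obtain ⟨b, rfl⟩ := Ideal.mem_span_singleton'.mp hc
    have hmem : α * e + b * p ^ n ∈ Ideal.span {p, α} ^ n :=
      add_mem (Ideal.mul_mem_left _ _ he)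
        (Ideal.mul_mem_left _ _ (Ideal.pow_mem_pow (Ideal.subset_span (by simp)) n))
    rwa [show α * e + b * p ^ n = α by linear_combination α * hec - b * h] at hmem

theorem span_pair_ne_span_pair (hco : IsCoprime p (α + α')) (hne : Ideal.span {p, α} ≠ ⊤) :
    Ideal.span {p, α} ≠ Ideal.span {p, α'} := by
  intro heq
  have hα' : α' ∈ Ideal.span {p, α} := heq ▸ Ideal.subset_span (by simp)
  obtain ⟨x, y, hxy⟩ := hco
  refine hne ((Ideal.eq_top_iff_one _).mpr (hxy ▸ ?_))
  exact add_mem (Ideal.mul_mem_left _ _ (Ideal.subset_span (by simp)))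
    (Ideal.mul_mem_left _ _ (add_mem (Ideal.subset_span (by simp)) hα'))

end SpanPair

theorem orderOf_mk0_eq {R : Type*} [CommRing R] [IsDedekindDomain R] {P : Ideal R}
    (hP : P ∈ nonZeroDivisors (Ideal R)) {n : ℕ} (hn : 0 < n) {α : R} (h : P ^ n = Ideal.span {α})
    (hα : ∀ l t : ℕ, l.Prime → l * t = n → ∀ (β : R) (u : Rˣ), β ^ l * u ≠ α) :
    orderOf (ClassGroup.mk0 ⟨P, hP⟩) = n := by
  have hmk (k : ℕ) : ClassGroup.mk0 ⟨P, hP⟩ ^ k = 1 ↔ (P ^ k).IsPrincipal := by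
    rw [← map_pow, ← ClassGroup.mk0_eq_one_iff (pow_mem hP k)]
    rfl
  refine orderOf_eq_of_pow_and_pow_div_prime hn ((hmk n).mpr ⟨⟨α, h⟩⟩) fun l hl hln hpow => ?_
  obtain ⟨t, rfl⟩ := hln
  rw [Nat.mul_div_cancel_left t hl.pos, hmk] at hpow
  obtain ⟨β, hβ⟩ := hpow.principal
  have hspan : Ideal.span {β ^ l} = Ideal.span {α} := by
    rw [← h, ← Ideal.span_singleton_pow, mul_comm, pow_mul, hβ]
  obtain ⟨u, hu⟩ := Ideal.span_singleton_eq_span_singleton.mp hspan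
  exact hα l t hl rfl β u hu

theorem isPrime_of_mul_eq_span_natCast {K : Type*} [Field K] [NumberField K]
    (hK : Module.finrank ℚ K ≤ 2) {p : ℕ} (hp : p.Prime) {P Q : Ideal (𝓞 K)} (hP : P ≠ ⊤)
    (hQ : Q ≠ ⊤) (h : P * Q = Ideal.span {(p : 𝓞 K)}) : P.IsPrime ∧ Q.IsPrime := by
  have hnorm : Ideal.absNorm P * Ideal.absNorm Q = p ^ Module.finrank ℚ K := by
    rw [← map_mul, h, Ideal.absNorm_span_singleton, ← RingOfIntegers.rank,
      ← map_natCast (algebraMap ℤ (𝓞 K)) p, Algebra.norm_algebraMap]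
    simp only [Int.natAbs_pow, Int.natAbs_natCast]
  have hP1 : Ideal.absNorm P ≠ 1 := mt Ideal.absNorm_eq_one_iff.mp hP
  have hQ1 : Ideal.absNorm Q ≠ 1 := mt Ideal.absNorm_eq_one_iff.mp hQ
  have hpos : 0 < Module.finrank ℚ K := Module.finrank_pos
  have hfin : Module.finrank ℚ K = 2 := by
    by_contra hne
    rw [show Module.finrank ℚ K = 1 by omega, pow_one] at hnorm
    rcases Nat.prime_mul_iff.mp (hnorm ▸ hp) with h | h
    · exact hQ1 h.2
    · exact hP1 h.2
  rw [hfin, hp.mul_eq_prime_sq_iff hP1 hQ1] at hnorm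
  exact ⟨Ideal.isPrime_of_irreducible_absNorm (hnorm.1.symm ▸ hp),
    Ideal.isPrime_of_irreducible_absNorm (hnorm.2.symm ▸ hp)⟩

theorem eq_or_eq_of_mem_of_mul_eq_span {R : Type*} [CommRing R] [IsDedekindDomain R] {p : R}
    (hp : p ≠ 0) {P Q I : Ideal R} (hP : P.IsPrime) (hQ : Q.IsPrime) (h : P * Q = Ideal.span {p})
    (hI : I.IsPrime) (hpI : p ∈ I) : I = P ∨ I = Q := by
  have hne (J : Ideal R) (hJ : P * Q ≤ J) : J ≠ ⊥ := fun h0 => hp <| by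
    rwa [h0, h, Ideal.span_singleton_le_iff_mem, Ideal.mem_bot] at hJ
  refine (hI.mul_le.mp (h ▸ (Ideal.span_singleton_le_iff_mem I).mpr hpI)).imp
    (fun hPI => ?_) (fun hQI => ?_)
  · exact ((hP.isMaximal (hne P Ideal.mul_le_left)).eq_of_le hI.ne_top hPI).symm
  · exact ((hQ.isMaximal (hne Q Ideal.mul_le_right)).eq_of_le hI.ne_top hQI).symm

theorem ne_top_of_orderOf_mk0_ne_one {R : Type*} [CommRing R] [IsDedekindDomain R] {P : Ideal R}
    (hP : P ∈ nonZeroDivisors (Ideal R)) (h : orderOf (ClassGroup.mk0 ⟨P, hP⟩) ≠ 1) : P ≠ ⊤ := by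
  rintro rfl
  exact h (orderOf_eq_one_iff.mpr ((ClassGroup.mk0_eq_one_iff hP).mpr inferInstance))

theorem orderOf_mk0_eq_orderOf_mk0 {R : Type*} [CommRing R] [IsDedekindDomain R] {P Q : Ideal R}
    (hP : P ∈ nonZeroDivisors (Ideal R)) (hQ : Q ∈ nonZeroDivisors (Ideal R)) {x : R} (hx : x ≠ 0)
    (h : P * Q = Ideal.span {x}) :
    orderOf (ClassGroup.mk0 ⟨P, hP⟩) = orderOf (ClassGroup.mk0 ⟨Q, hQ⟩) := by
  have hinv : ClassGroup.mk0 ⟨P, hP⟩ = (ClassGroup.mk0 ⟨Q, hQ⟩)⁻¹ :=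
    ClassGroup.mk0_eq_mk0_inv_iff.mpr ⟨x, hx, h⟩
  rw [hinv, orderOf_inv]

theorem exists_mul_eq_span_and_orderOf_mk0_eq {K : Type*} [Field K] [NumberField K]
    (hK : Module.finrank ℚ K ≤ 2) {p n : ℕ} (hp : p.Prime) (hn : 1 < n) {α α' : 𝓞 K}
    (h : α * α' = p ^ n) (hco : IsCoprime (p : 𝓞 K) (α + α'))
    (hα : ∀ l t : ℕ, l.Prime → l * t = n → ∀ (β : 𝓞 K) (u : (𝓞 K)ˣ), β ^ l * u ≠ α) :
    (∃ P Q : Ideal (𝓞 K), P ≠ Q ∧ P.IsPrime ∧ Q.IsPrime ∧ P * Q = Ideal.span {(p : 𝓞 K)}) ∧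
    ∀ P : Ideal (𝓞 K), P.IsPrime → (p : 𝓞 K) ∈ P → ∀ hP0 : P ≠ 0,
      orderOf (ClassGroup.mk0 ⟨P, mem_nonZeroDivisors_of_ne_zero hP0⟩) = n := by
  have hp0 : (p : 𝓞 K) ≠ 0 := Nat.cast_ne_zero.mpr hp.ne_zero
  obtain ⟨P, hP⟩ : ∃ P, P = Ideal.span {(p : 𝓞 K), α} := ⟨_, rfl⟩
  obtain ⟨Q, hQ⟩ : ∃ Q, Q = Ideal.span {(p : 𝓞 K), α'} := ⟨_, rfl⟩
  have hPQ : P * Q = Ideal.span {(p : 𝓞 K)} := by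
    rw [hP, hQ, span_pair_mul_span_pair_eq (h ▸ dvd_pow_self _ (by omega)) hco]
  have hPQ0 : P * Q ≠ 0 := by rwa [hPQ, Ne, Ideal.zero_eq_bot, Ideal.span_singleton_eq_bot]
  have hP0 := mem_nonZeroDivisors_of_ne_zero (left_ne_zero_of_mul hPQ0)
  have hQ0 := mem_nonZeroDivisors_of_ne_zero (right_ne_zero_of_mul hPQ0)
  have hPn : orderOf (ClassGroup.mk0 ⟨P, hP0⟩) = n :=
    orderOf_mk0_eq hP0 (by omega) (hP ▸ span_pair_pow_eq_span_singleton h hco) hα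
  have hQn : orderOf (ClassGroup.mk0 ⟨Q, hQ0⟩) = n :=
    (orderOf_mk0_eq_orderOf_mk0 hP0 hQ0 hp0 hPQ).symm.trans hPn
  have hPt : P ≠ ⊤ := ne_top_of_orderOf_mk0_ne_one hP0 (hPn.trans_ne hn.ne')
  have hQt : Q ≠ ⊤ := ne_top_of_orderOf_mk0_ne_one hQ0 (hQn.trans_ne hn.ne')
  have hne : P ≠ Q := by
    rw [hP] at hPt
    rw [hP, hQ]
    exact span_pair_ne_span_pair hco hPt
  obtain ⟨hPp, hQp⟩ := isPrime_of_mul_eq_span_natCast hK hp hPt hQt hPQ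
  refine ⟨⟨P, Q, hne, hPp, hQp, hPQ⟩, fun I hI hpI hI0 => ?_⟩
  rcases eq_or_eq_of_mem_of_mul_eq_span hp0 hPp hQp hPQ hI hpI with rfl | rfl
  exacts [hPn, hQn]

theorem isCoprime_natCast_add_add_sub {p q : ℕ} (h : p.Coprime (2 * q)) {R : Type*} [CommRing R]
    (ω : R) : IsCoprime (p : R) ((q + ω) + (q - ω)) := by
  have hR := (Nat.isCoprime_iff_coprime.mpr h).map (Int.castRingHom R)
  rw [show (q + ω) + (q - ω) = 2 * (q : R) by ring]
  simpa using hR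

theorem adjoin_simple_gen_eq_top (F : Type*) {E : Type*} [Field F] [Field E] [Algebra F E] (x : E) :
    F⟮AdjoinSimple.gen F x⟯ = ⊤ :=
  lift_injective _ (by rw [lift_adjoin_simple, AdjoinSimple.coe_gen, lift_top])

theorem stmt_9_general {p q n : ℕ} (hp : p.Prime) (hmod : p % 4 = 3)
    (hw : 2 ^ (p - 1) ≡ 1 [MOD p ^ 2]) (hq : q.Prime) (hqp : q < p)
    (hqw : ¬ q ^ (p - 1) ≡ 1 [MOD p ^ 2]) (hodd : Odd n) (hcomp : 1 < n ∧ ¬ n.Prime)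
    {K : Type*} [Field K] [NumberField K] {z : K} (hz : z ^ 2 = (q : K) ^ 2 - (p : K) ^ n)
    (htop : ℚ⟮z⟯ = ⊤) :
    (∃ P Q : Ideal (𝓞 K), P ≠ Q ∧ P.IsPrime ∧ Q.IsPrime ∧ P * Q = Ideal.span {(p : 𝓞 K)}) ∧
    ∀ P : Ideal (𝓞 K), P.IsPrime → (p : 𝓞 K) ∈ P → ∀ hP0 : P ≠ 0,
      orderOf (ClassGroup.mk0 ⟨P, mem_nonZeroDivisors_of_ne_zero hP0⟩) = n := by
  have hzm : z ^ 2 = ((q ^ 2 - p ^ n : ℤ) : K) := by rw [hz]; push_cast; rfl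
  have hzint : IsIntegral ℤ z := .of_pow two_pos (hzm ▸ isIntegral_algebraMap (R := ℤ))
  obtain ⟨ω, rfl⟩ : ∃ ω : 𝓞 K, (ω : K) = z := ⟨⟨z, hzint⟩, rfl⟩
  have hω : ω ^ 2 = (q : 𝓞 K) ^ 2 - (p : 𝓞 K) ^ n :=
    RingOfIntegers.coe_injective (by simpa using hz)
  have hpq : p.Coprime (2 * q) :=
    (Nat.coprime_two_right.mpr (Nat.odd_iff.mpr (by omega))).mul_right
      ((Nat.coprime_primes hp hq).mpr hqp.ne')
  have hq2 : Odd q := hq.odd_of_ne_two (by rintro rfl; exact hqw hw)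
  refine exists_mul_eq_span_and_orderOf_mk0_eq (finrank_le_two_of_sq_eq_intCast hzm htop) hp
    hcomp.1 (α := q + ω) (α' := q - ω) (by linear_combination -hω)
    (isCoprime_natCast_add_add_sub hpq ω) fun l t hl hlt β u => ?_
  subst hlt
  obtain ⟨hlodd, htodd⟩ := Nat.odd_mul.mp hodd
  have ht1 : t ≠ 1 := by rintro rfl; exact hcomp.2 (by rwa [mul_one])
  exact pow_mul_unit_ne hp hmod hw hq hq2 hqp hqw hlodd hl.ne_one htodd ht1 hω htop β u

/-- Let `p` be a prime with `p ≡ 3 (mod 4)` and `2^(p−1) ≡ 1 (mod p^2)`, let `q1` be a prime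
factor of `p − 2` such that `q1^(p−1) ≢ 1 (mod p^2)`, and let `n` be an odd composite number.
Then `p` splits in the imaginary quadratic field `K = ℚ(√(q1^2 − p^n))`, and for any prime
ideal `℘` of the ring of integers of `K` lying over `p`, the order of the ideal class of `℘`
in the ideal class group of `K` is exactly `n`. -/
theorem stmt_9 (p : ℕ) (hp : p.Prime) (hmod : p % 4 = 3)
    (hw : 2 ^ (p - 1) ≡ 1 [MOD p ^ 2])
    (q1 : ℕ) (hq1 : q1.Prime) (hq1dvd : q1 ∣ p - 2)
    (hq1nw : ¬ (q1 ^ (p - 1) ≡ 1 [MOD p ^ 2]))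
    (n : ℕ) (hodd : Odd n) (hcomp : 1 < n ∧ ¬ n.Prime)
    (z : ℂ) (hz : z ^ 2 = (q1 : ℂ) ^ 2 - (p : ℂ) ^ n)
    (K : IntermediateField ℚ ℂ) (hK : K = IntermediateField.adjoin ℚ {z})
    [NumberField K] :
    (∃ P Q : Ideal (NumberField.RingOfIntegers K), P ≠ Q ∧ P.IsPrime ∧ Q.IsPrime ∧
        P * Q = Ideal.span {(p : NumberField.RingOfIntegers K)}) ∧
    ∀ (P : Ideal (NumberField.RingOfIntegers K)), P.IsPrime →
      (p : NumberField.RingOfIntegers K) ∈ P → ∀ (hP0 : P ≠ 0),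
      orderOf (ClassGroup.mk0 ⟨P, mem_nonZeroDivisors_of_ne_zero hP0⟩) = n := by
  subst hK
  have hqp : q1 < p := (Nat.le_of_dvd (by omega) hq1dvd).trans_lt (by omega)
  exact stmt_9_general hp hmod hw hq1 hqp hq1nw hodd hcomp
    (z := IntermediateField.AdjoinSimple.gen ℚ z) (Subtype.ext (by simpa using hz))
    (by convert adjoin_simple_gen_eq_top ℚ z <;> exact Subsingleton.elim _ _)
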